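/- Let n ≥ 3 and let K ⊆ ℝⁿ be a closed convex set with nonempty interior and K ≠ ℝⁿ. Let δ : S^{n−1} → ℝ be continuous and for u ∈ S^{n−1} set H(u) = {x ∈ ℝⁿ : ⟨x, u⟩ = δ(u)}. If for every u ∈ S^{n−1} either H(u) ⊆ K or frontier K ∩ H(u) is an (n−1)-dimensional convex quadric in H(u), then frontier K is a convex quadric. -/

import Mathlib

open Set Metric RealInnerProductSpace

noncomputable section

/-- Euclidean n-space. -/
abbrev En (n : ℕ) := EuclideanSpace ℝ (Fin n)

/-- A quadric surface in ℝⁿ: the zero set of a quadratic polynomial whose quadratic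
part (given by a symmetric matrix) is not identically zero. -/
def IsQuadricSurface {n : ℕ} (Q : Set (En n)) : Prop :=
  ∃ (a : Matrix (Fin n) (Fin n) ℝ) (b : Fin n → ℝ) (c : ℝ),
    a.IsSymm ∧ a ≠ 0 ∧
    Q = {x : En n | (∑ i, ∑ k, a i k * x i * x k) + 2 * (∑ i, b i * x i) + c = 0}

/-- A real quadric surface: a nonempty quadric surface. -/
def IsRealQuadricSurface {n : ℕ} (Q : Set (En n)) : Prop :=
  IsQuadricSurface Q ∧ Q.Nonempty

/-- The set of connected components of a subset `F` of a topological space. -/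
def componentsIn {α : Type*} [TopologicalSpace α] (F : Set α) : Set (Set α) :=
  {C | ∃ x ∈ F, C = connectedComponentIn F x}

/-- A convex quadric: the frontier of a convex connected component of the complement
of a real quadric surface. -/
def IsConvexQuadric {n : ℕ} (S : Set (En n)) : Prop :=
  ∃ Q U : Set (En n), IsRealQuadricSurface Q ∧ U ∈ componentsIn Qᶜ ∧
    Convex ℝ U ∧ S = frontier U
/-- `S` is an (n−1)-dimensional convex quadric in the hyperplane `H ⊆ ℝⁿ`:
for some affine isometry φ : ℝ^{n−1} → ℝⁿ with image `H`, the set φ⁻¹(S) is a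
convex quadric in ℝ^{n−1}. -/
def IsConvexQuadricIn {n : ℕ} (H S : Set (En n)) : Prop :=
  S ⊆ H ∧ ∃ φ : En (n - 1) →ᵃⁱ[ℝ] En n,
    Set.range (φ : En (n - 1) → En n) = H ∧ IsConvexQuadric ((φ : En (n - 1) → En n) ⁻¹' S)

/-- The hyperplane H(u) = {x : ⟨x, u⟩ = δ(u)} associated to a unit vector u. -/
def sphHyp {n : ℕ} (δ : sphere (0 : En n) 1 → ℝ) (u : sphere (0 : En n) 1) : Set (En n) :=
  {x : En n | ⟪x, (u : En n)⟫ = δ u}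

/-!
If no linear functional tends to `-∞` at infinity on `K`, then `K` is a cylinder, and the section by
a hyperplane orthogonal to its lines already determines it.

Otherwise extend `δ` homogeneously to normals `y ≠ 0`. No hyperplane `⟪x, y⟫ = D y` lies in `K`,
each of them meets the interior of `K`, and each section is cut out by a quadratic `q` that is
positive inside. When a section is bounded, `q` is determined up to a positive factor. If the
hyperplanes of three such sections have independent normals and meet pairwise inside `K`, the
factors can be chosen so that the quadratics agree on the pairwise intersections. This uses that at
a common frontier point the derivative of each `q` is a positive multiple of the inward normal of
`K`. So a single `Q` interpolates the three, and `Q` then vanishes on the frontier in any fourth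
section crossing them in general position.

Hence, locally in `y`, one `Q` fits all sections. Not all nearby hyperplanes meet inside `K`, but
those passing a fixed interior point at nearly the same height do, so one obtains a `Q` for each
level of that height and compares neighbouring levels. Since the normals whose sections are bounded
form two opposite convex cones (or everything), each cone has one `Q`. The two agree up to a factor
because both vanish on the frontier far down in a direction `y₀` of the cone, and an unbounded
section reaches this region as well. Finally every frontier point of `K` lies on some hyperplane
`⟪x, y⟫ = D y`.
-/

section Quadratic

variable {E F : Type*} [AddCommGroup E] [Module ℝ E] [AddCommGroup F] [Module ℝ F]

/-- Polynomial functions of degree at most two on a real vector space, written through a bilinear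
form that need not be symmetric. -/
def IsQuadratic (q : E → ℝ) : Prop :=
  ∃ (B : E →ₗ[ℝ] E →ₗ[ℝ] ℝ) (l : E →ₗ[ℝ] ℝ) (c : ℝ), ∀ x, q x = B x x + l x + c

namespace IsQuadratic

variable {q r : E → ℝ}

lemma exists_expansion (hq : IsQuadratic q) (e : E) :
    ∃ (B : E →ₗ[ℝ] E →ₗ[ℝ] ℝ) (l : E →ₗ[ℝ] ℝ), ∀ v, q (e + v) = q e + l v + B v v := by
  obtain ⟨B, l, c, h⟩ := hq
  refine ⟨B, l + B e + B.flip e, fun v => ?_⟩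
  simp only [h, map_add, LinearMap.add_apply, LinearMap.flip_apply]
  ring

lemma add (hq : IsQuadratic q) (hr : IsQuadratic r) : IsQuadratic fun x => q x + r x := by
  obtain ⟨B, l, c, h⟩ := hq
  obtain ⟨B', l', c', h'⟩ := hr
  refine ⟨B + B', l + l', c + c', fun x => ?_⟩
  simp only [h, h', LinearMap.add_apply]
  ring

lemma const_mul (hq : IsQuadratic q) (a : ℝ) : IsQuadratic fun x => a * q x := by
  obtain ⟨B, l, c, h⟩ := hq
  refine ⟨a • B, a • l, a * c, fun x => ?_⟩
  simp only [h, LinearMap.smul_apply, smul_eq_mul]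
  ring

lemma sub (hq : IsQuadratic q) (hr : IsQuadratic r) : IsQuadratic fun x => q x - r x := by
  simpa only [neg_one_mul, ← sub_eq_add_neg] using hq.add (hr.const_mul (-1))

lemma comp_affineMap (hq : IsQuadratic q) (A : F →ᵃ[ℝ] E) : IsQuadratic fun x => q (A x) := by
  obtain ⟨B, l, h⟩ := hq.exists_expansion (A 0)
  refine ⟨B.compl₁₂ A.linear A.linear, l ∘ₗ A.linear, q (A 0), fun x => ?_⟩
  have hA : A x = A 0 + A.linear x := by
    rw [add_comm]
    exact congrFun A.decomp x
  simp only [hA, h, LinearMap.compl₁₂_apply, LinearMap.comp_apply]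
  ring

lemma exists_eq_on_line (hq : IsQuadratic q) (z d : E) :
    ∃ a b : ℝ, ∀ t : ℝ, q (z + t • d) = q z + t * a + t ^ 2 * b := by
  obtain ⟨B, l, h⟩ := hq.exists_expansion z
  refine ⟨l d, B d d, fun t => ?_⟩
  simp only [h, map_smul, LinearMap.smul_apply, smul_eq_mul]
  ring

end IsQuadratic

lemma quadratic_coeffs_eq_zero {a b s t : ℝ} (hs : s ≠ 0) (ht : t ≠ 0) (hst : s ≠ t)
    (has : s * a + s ^ 2 * b = 0) (hat : t * a + t ^ 2 * b = 0) : a = 0 ∧ b = 0 := by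
  have has' : a + s * b = 0 := mul_left_cancel₀ hs (by linear_combination has)
  have hat' : a + t * b = 0 := mul_left_cancel₀ ht (by linear_combination hat)
  have hb : b = 0 := mul_left_cancel₀ (sub_ne_zero.2 hst) (by linear_combination has' - hat')
  exact ⟨by simpa [hb] using has', hb⟩

lemma IsQuadratic.eq_zero_on_line {q : E → ℝ} (hq : IsQuadratic q) {z d : E} {s t : ℝ}
    (hs : s ≠ 0) (ht : t ≠ 0) (hst : s ≠ t) (hz : q z = 0) (hzs : q (z + s • d) = 0)
    (hzt : q (z + t • d) = 0) (r : ℝ) : q (z + r • d) = 0 := by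
  obtain ⟨a, b, h⟩ := hq.exists_eq_on_line z d
  rw [h, hz] at hzs hzt
  obtain ⟨ha, hb⟩ := quadratic_coeffs_eq_zero (a := a) (b := b) hs ht hst
    (by linarith) (by linarith)
  rw [h, hz, ha, hb]
  ring

lemma IsQuadratic.eq_zero_of_eq_zero_on_double_cone {q : E → ℝ} (hq : IsQuadratic q) {z d v : E}
    {r : ℝ} (hr : 0 < r) (h : ∀ ε : ℝ, |ε| < r → ∀ c : ℝ, q (z + c • (d + ε • v)) = 0) :
    q (z + v) = 0 := by
  have hplane {c : ℝ} (hc : c ≠ 0) : q (z + v + c • d) = 0 := by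
    have hzero (ε : ℝ) (hε : |ε| < r) : q (z + c • d + ε • c • v) = 0 := by
      rw [← h ε hε c]
      congr 1
      module
    have := hq.eq_zero_on_line (z := z + c • d) (d := c • v) (s := r / 2) (t := -(r / 2))
      (by linarith) (by linarith) (by linarith) (by simpa using hzero 0 (by simpa using hr))
      (hzero _ (by rw [abs_of_pos] <;> linarith))
      (hzero _ (by rw [abs_neg, abs_of_pos] <;> linarith)) c⁻¹
    rwa [inv_smul_smul₀ hc, add_right_comm] at this
  have := hq.eq_zero_on_line (z := z + v + (1 : ℝ) • d) (d := d) (s := 1) (t := 2) one_ne_zero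
    two_ne_zero (by norm_num) (hplane one_ne_zero)
    (by rw [add_assoc, ← add_smul]; exact hplane (by norm_num))
    (by rw [add_assoc, ← add_smul]; exact hplane (by norm_num)) (-1)
  simpa using this

end Quadratic

lemma IsQuadratic.continuous {E : Type*} [NormedAddCommGroup E] [NormedSpace ℝ E]
    [FiniteDimensional ℝ E] {q : E → ℝ} (hq : IsQuadratic q) : Continuous q := by
  obtain ⟨B, l, c, h⟩ := hq
  have hB : Continuous fun x => LinearMap.toContinuousLinearMap (B x) :=
    LinearMap.continuous_of_finiteDimensional
      ((LinearMap.toContinuousLinearMap : (E →ₗ[ℝ] ℝ) ≃ₗ[ℝ] _).toLinearMap ∘ₗ B)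
  rw [funext h]
  exact ((hB.clm_apply continuous_id).add l.continuous_of_finiteDimensional).add continuous_const

section Hyperplanes

variable {E : Type*} [NormedAddCommGroup E] [InnerProductSpace ℝ E]

lemma inner_lineMap_eq {z x y : E} {c : ℝ} (hz : ⟪z, y⟫ = c) (hx : ⟪x, y⟫ = c) (t : ℝ) :
    ⟪z + t • (x - z), y⟫ = c := by
  rw [inner_add_left, real_inner_smul_left, inner_sub_left, hz, hx, sub_self, mul_zero, add_zero]

lemma exists_forall_inner_eq {ι : Type*} [Finite ι] {v : ι → E} (hv : LinearIndependent ℝ v)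
    (c : ι → ℝ) : ∃ x, ∀ i, ⟪x, v i⟫ = c i := by
  classical
  cases nonempty_fintype ι
  have hdet : IsUnit (Matrix.gram ℝ v).det :=
    (Matrix.det_gram_ne_zero_iff_linearIndependent.2 hv).isUnit
  refine ⟨∑ k, Matrix.vecMul c (Matrix.gram ℝ v)⁻¹ k • v k, fun i => ?_⟩
  calc ⟪∑ k, Matrix.vecMul c (Matrix.gram ℝ v)⁻¹ k • v k, v i⟫
      = Matrix.vecMul (Matrix.vecMul c (Matrix.gram ℝ v)⁻¹) (Matrix.gram ℝ v) i := by
        simp only [sum_inner, real_inner_smul_left]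
        rfl
    _ = c i := by rw [Matrix.vecMul_vecMul, Matrix.nonsing_inv_mul _ hdet, Matrix.vecMul_one]

lemma exists_inner_eq_three {y₁ y₂ y₃ : E} (hy : LinearIndependent ℝ ![y₁, y₂, y₃])
    (a b c : ℝ) : ∃ x, ⟪x, y₁⟫ = a ∧ ⟪x, y₂⟫ = b ∧ ⟪x, y₃⟫ = c := by
  obtain ⟨x, hx⟩ := exists_forall_inner_eq hy ![a, b, c]
  exact ⟨x, hx 0, hx 1, hx 2⟩

/-- The projection along `e` to the hyperplane `⟪x, y⟫ = c`; it lands there when `⟪e, y⟫ = 1`. -/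
def hyperplaneProj (y : E) (c : ℝ) (e : E) : E →ᵃ[ℝ] E :=
  (LinearMap.id - (innerₛₗ ℝ y).smulRight e).toAffineMap + AffineMap.const ℝ E (c • e)

lemma hyperplaneProj_apply (y : E) (c : ℝ) (e x : E) :
    hyperplaneProj y c e x = x - (⟪x, y⟫ - c) • e := by
  simp only [hyperplaneProj, AffineMap.coe_add, LinearMap.coe_toAffineMap, Pi.add_apply,
    LinearMap.sub_apply, LinearMap.id_apply, LinearMap.smulRight_apply, innerₛₗ_apply_apply,
    AffineMap.const_apply, real_inner_comm x y]
  module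

lemma inner_hyperplaneProj (y : E) (c : ℝ) (e x y' : E) :
    ⟪hyperplaneProj y c e x, y'⟫ = ⟪x, y'⟫ - (⟪x, y⟫ - c) * ⟪e, y'⟫ := by
  rw [hyperplaneProj_apply, inner_sub_left, real_inner_smul_left]

lemma hyperplaneProj_of_mem {y : E} {c : ℝ} {e x : E} (hx : ⟪x, y⟫ = c) :
    hyperplaneProj y c e x = x := by
  rw [hyperplaneProj_apply, hx, sub_self, zero_smul, sub_zero]

lemma inner_hyperplaneProj_of_inner_eq_one {y e : E} (he : ⟪e, y⟫ = 1) (c : ℝ) (x : E) :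
    ⟪hyperplaneProj y c e x, y⟫ = c := by
  rw [inner_hyperplaneProj, he]
  ring

lemma inner_hyperplaneProj_of_inner_eq_zero {y y' e : E} (he : ⟪e, y'⟫ = 0) (c : ℝ) (x : E) :
    ⟪hyperplaneProj y c e x, y'⟫ = ⟪x, y'⟫ := by
  rw [inner_hyperplaneProj, he, mul_zero, sub_zero]

lemma IsQuadratic.eq_mul_of_eq_zero_on_two_hyperplanes {g : E → ℝ} (hg : IsQuadratic g)
    {y₁ y₂ e₁ e₂ : E} {c₁ c₂ : ℝ} (h11 : ⟪e₁, y₁⟫ = 1) (h12 : ⟪e₁, y₂⟫ = 0)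
    (h21 : ⟪e₂, y₁⟫ = 0) (h22 : ⟪e₂, y₂⟫ = 1) (hg₁ : ∀ x, ⟪x, y₁⟫ = c₁ → g x = 0)
    (hg₂ : ∀ x, ⟪x, y₂⟫ = c₂ → g x = 0) :
    ∃ β : ℝ, ∀ x, g x = β * ((⟪x, y₁⟫ - c₁) * (⟪x, y₂⟫ - c₂)) := by
  obtain ⟨B, l, c, h⟩ := hg
  refine ⟨B e₁ e₂ + B e₂ e₁, fun x => ?_⟩
  set a := ⟪x, y₁⟫ - c₁ with ha
  set b := ⟪x, y₂⟫ - c₂ with hb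
  set p := x - a • e₁ - b • e₂ with hp
  have hx : x = p + a • e₁ + b • e₂ := by rw [hp]; abel
  have zero_along_e₁ (s : ℝ) : g (p + s • e₁) = 0 := hg₂ _ <| by
    simp only [hp, inner_add_left, inner_sub_left, real_inner_smul_left, h12, h22, hb]
    ring
  have zero_along_e₂ (s : ℝ) : g (p + s • e₂) = 0 := hg₁ _ <| by
    simp only [hp, inner_add_left, inner_sub_left, real_inner_smul_left, h11, h21, ha]
    ring
  have z0 := zero_along_e₁ 0
  have z1 := zero_along_e₁ 1
  have z2 := zero_along_e₁ (-1)
  have z3 := zero_along_e₂ 1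
  have z4 := zero_along_e₂ (-1)
  rw [hx, h]
  rw [h] at z0 z1 z2 z3 z4
  simp only [map_add, map_smul, LinearMap.add_apply, LinearMap.smul_apply, smul_eq_mul]
    at z0 z1 z2 z3 z4 ⊢
  have hB₁ : B e₁ e₁ = 0 := by linarith
  have hB₂ : B e₂ e₂ = 0 := by linarith
  have hl₁ : B p e₁ + B e₁ p + l e₁ = 0 := by linarith
  have hl₂ : B p e₂ + B e₂ p + l e₂ = 0 := by linarith
  have hc : B p p + l p + c = 0 := by linarith
  linear_combination a * hl₁ + b * hl₂ + hc + a ^ 2 * hB₁ + b ^ 2 * hB₂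

lemma IsQuadratic.eq_zero_of_eq_zero_on_three_hyperplanes {g : E → ℝ} (hg : IsQuadratic g)
    {y₁ y₂ y₃ : E} (hy : LinearIndependent ℝ ![y₁, y₂, y₃]) {c₁ c₂ c₃ : ℝ}
    (hg₁ : ∀ x, ⟪x, y₁⟫ = c₁ → g x = 0) (hg₂ : ∀ x, ⟪x, y₂⟫ = c₂ → g x = 0)
    (hg₃ : ∀ x, ⟪x, y₃⟫ = c₃ → g x = 0) (x : E) : g x = 0 := by
  obtain ⟨e₁, h11, h12, -⟩ := exists_inner_eq_three hy 1 0 0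
  obtain ⟨e₂, h21, h22, -⟩ := exists_inner_eq_three hy 0 1 0
  obtain ⟨β, hβ⟩ := hg.eq_mul_of_eq_zero_on_two_hyperplanes h11 h12 h21 h22 hg₁ hg₂
  obtain ⟨p, hp₁, hp₂, hp₃⟩ := exists_inner_eq_three hy (c₁ + 1) (c₂ + 1) c₃
  have hβ0 : β = 0 := by simpa [hβ, hp₁, hp₂] using hg₃ p hp₃
  rw [hβ, hβ0, zero_mul]

lemma eq_zero_of_mul_eq_zero_on_codim_two {y₁ y₂ y₃ y₄ : E} {c₁ c₂ c₃ c₄ β : ℝ}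
    (h134 : LinearIndependent ℝ ![y₁, y₃, y₄]) (h234 : LinearIndependent ℝ ![y₂, y₃, y₄])
    (h : ∀ x, ⟪x, y₃⟫ = c₃ → ⟪x, y₄⟫ = c₄ → β * ((⟪x, y₁⟫ - c₁) * (⟪x, y₂⟫ - c₂)) = 0) :
    β = 0 := by
  obtain ⟨z, hz₁, hz₃, hz₄⟩ := exists_inner_eq_three h134 c₁ c₃ c₄
  obtain ⟨f₁, hf₁₁, hf₁₃, hf₁₄⟩ := exists_inner_eq_three h134 1 0 0
  obtain ⟨f₂, hf₂₂, hf₂₃, hf₂₄⟩ := exists_inner_eq_three h234 1 0 0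
  by_contra hβ
  have hmul (a b : ℝ) :
      (a + b * ⟪f₂, y₁⟫) * (⟪z, y₂⟫ + (a * ⟪f₁, y₂⟫ + b) - c₂) = 0 := by
    have := h (z + (a • f₁ + b • f₂))
      (by simp only [inner_add_left, real_inner_smul_left, hz₃, hf₁₃, hf₂₃]; ring)
      (by simp only [inner_add_left, real_inner_smul_left, hz₄, hf₁₄, hf₂₄]; ring)
    simp only [inner_add_left, real_inner_smul_left, hz₁, hf₁₁, hf₂₂, mul_one] at this
    linear_combination (mul_eq_zero.1 this).resolve_left hβ
  have t1 := hmul 1 0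
  have t2 := hmul (-1) 0
  have t3 := hmul 0 1
  have t5 := hmul 1 1
  have hf₁₂ : ⟪f₁, y₂⟫ = 0 := by linear_combination (t1 + t2) / 2
  have hone : (1 : ℝ) + ⟪f₂, y₁⟫ * ⟪f₁, y₂⟫ = 0 := by linear_combination t5 - t1 - t3
  rw [hf₁₂] at hone
  norm_num at hone

lemma IsQuadratic.eq_zero_on_hyperplane {g : E → ℝ} (hg : IsQuadratic g) {y₁ y₂ y₃ y₄ : E}
    {c₁ c₂ c₃ c₄ : ℝ} (h124 : LinearIndependent ℝ ![y₁, y₂, y₄])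
    (h134 : LinearIndependent ℝ ![y₁, y₃, y₄]) (h234 : LinearIndependent ℝ ![y₂, y₃, y₄])
    (hg₁ : ∀ x, ⟪x, y₄⟫ = c₄ → ⟪x, y₁⟫ = c₁ → g x = 0)
    (hg₂ : ∀ x, ⟪x, y₄⟫ = c₄ → ⟪x, y₂⟫ = c₂ → g x = 0)
    (hg₃ : ∀ x, ⟪x, y₄⟫ = c₄ → ⟪x, y₃⟫ = c₃ → g x = 0) {x : E} (hx : ⟪x, y₄⟫ = c₄) :
    g x = 0 := by
  obtain ⟨e₁, h11, h12, -⟩ := exists_inner_eq_three h124 1 0 0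
  obtain ⟨e₂, h21, h22, -⟩ := exists_inner_eq_three h124 0 1 0
  obtain ⟨e₄, h41, h42, h44⟩ := exists_inner_eq_three h124 0 0 1
  obtain ⟨β, hβ⟩ := (hg.comp_affineMap
    (hyperplaneProj y₄ c₄ e₄)).eq_mul_of_eq_zero_on_two_hyperplanes h11 h12 h21 h22
      (fun x h => hg₁ _ (inner_hyperplaneProj_of_inner_eq_one h44 c₄ x)
        ((inner_hyperplaneProj_of_inner_eq_zero h41 c₄ x).trans h))
      (fun x h => hg₂ _ (inner_hyperplaneProj_of_inner_eq_one h44 c₄ x)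
        ((inner_hyperplaneProj_of_inner_eq_zero h42 c₄ x).trans h))
  have hgβ (x : E) (hx : ⟪x, y₄⟫ = c₄) :
      g x = β * ((⟪x, y₁⟫ - c₁) * (⟪x, y₂⟫ - c₂)) := by
    simpa only [hyperplaneProj_of_mem hx] using hβ x
  have hβ0 : β = 0 := eq_zero_of_mul_eq_zero_on_codim_two h134 h234 fun x hx₃ hx₄ => by
    rw [← hgβ x hx₄, hg₃ x hx₄ hx₃]
  rw [hgβ x hx, hβ0, zero_mul]

lemma IsQuadratic.exists_modify_on_hyperplane {R q : E → ℝ} (hR : IsQuadratic R)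
    (hq : IsQuadratic q) (y e : E) (c : ℝ) :
    ∃ R' : E → ℝ, IsQuadratic R' ∧ (∀ x, ⟪x, y⟫ = c → R' x = q x) ∧
      ∀ x, q (hyperplaneProj y c e x) = R (hyperplaneProj y c e x) → R' x = R x := by
  refine ⟨fun x => R x + (q (hyperplaneProj y c e x) - R (hyperplaneProj y c e x)),
    hR.add ((hq.sub hR).comp_affineMap (hyperplaneProj y c e)), fun x hx => ?_, fun x hx => ?_⟩
  · simp only [hyperplaneProj_of_mem hx]
    ring
  · simp only [hx]
    ring

lemma exists_quadratic_eq_on_three_hyperplanes {q₁ q₂ q₃ : E → ℝ} (hq₁ : IsQuadratic q₁)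
    (hq₂ : IsQuadratic q₂) (hq₃ : IsQuadratic q₃) {y₁ y₂ y₃ : E}
    (hy : LinearIndependent ℝ ![y₁, y₂, y₃]) {c₁ c₂ c₃ : ℝ}
    (h12 : ∀ x, ⟪x, y₁⟫ = c₁ → ⟪x, y₂⟫ = c₂ → q₁ x = q₂ x)
    (h13 : ∀ x, ⟪x, y₁⟫ = c₁ → ⟪x, y₃⟫ = c₃ → q₁ x = q₃ x)
    (h23 : ∀ x, ⟪x, y₂⟫ = c₂ → ⟪x, y₃⟫ = c₃ → q₂ x = q₃ x) :
    ∃ Q : E → ℝ, IsQuadratic Q ∧ (∀ x, ⟪x, y₁⟫ = c₁ → Q x = q₁ x) ∧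
      (∀ x, ⟪x, y₂⟫ = c₂ → Q x = q₂ x) ∧ ∀ x, ⟪x, y₃⟫ = c₃ → Q x = q₃ x := by
  obtain ⟨e₂, e₂₁, e₂₂, -⟩ := exists_inner_eq_three hy 0 1 0
  obtain ⟨e₃, e₃₁, e₃₂, e₃₃⟩ := exists_inner_eq_three hy 0 0 1
  have proj₃ := inner_hyperplaneProj_of_inner_eq_one e₃₃ c₃
  obtain ⟨R, hR, hR₂, hRq⟩ := hq₁.exists_modify_on_hyperplane hq₂ y₂ e₂ c₂
  have hR₁ (x : E) (hx : ⟪x, y₁⟫ = c₁) : R x = q₁ x := hRq x (h12 _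
    ((inner_hyperplaneProj_of_inner_eq_zero e₂₁ c₂ x).trans hx)
    (inner_hyperplaneProj_of_inner_eq_one e₂₂ c₂ x)).symm
  obtain ⟨Q, hQ, hQ₃, hQR⟩ := hR.exists_modify_on_hyperplane hq₃ y₃ e₃ c₃
  refine ⟨Q, hQ, fun x hx => ?_, fun x hx => ?_, hQ₃⟩
  · have hx' := (inner_hyperplaneProj_of_inner_eq_zero e₃₁ c₃ x (y := y₃)).trans hx
    rw [hQR x (by rw [hR₁ _ hx', h13 _ hx' (proj₃ x)]), hR₁ x hx]
  · have hx' := (inner_hyperplaneProj_of_inner_eq_zero e₃₂ c₃ x (y := y₃)).trans hx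
    rw [hQR x (by rw [hR₂ _ hx', h23 _ hx' (proj₃ x)]), hR₂ x hx]

end Hyperplanes

section ConvexSets

lemma inter_frontier_nonempty_of_isPreconnected {X : Type*} [TopologicalSpace X] {s K : Set X}
    (hs : IsPreconnected s) (hsK : (s ∩ K).Nonempty) (hsKc : (s ∩ Kᶜ).Nonempty) :
    (s ∩ frontier K).Nonempty := by
  by_contra hempty
  have hcover : s ⊆ interior K ∪ (closure K)ᶜ := fun x hx => by
    by_contra hx'
    rw [mem_union, mem_compl_iff, not_or, not_not] at hx'
    exact hempty ⟨x, hx, hx'.2, hx'.1⟩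
  obtain ⟨x, hx, hxK⟩ := hsK
  obtain ⟨y, hy, hyK⟩ := hsKc
  obtain ⟨w, -, hwi, hwc⟩ := hs _ _ isOpen_interior isClosed_closure.isOpen_compl hcover
    ⟨x, hx, (hcover hx).resolve_right fun h => h (subset_closure hxK)⟩
    ⟨y, hy, (hcover hy).resolve_left fun h => hyK (interior_subset h)⟩
  exact hwc (interior_subset_closure hwi)

variable {E : Type*} [NormedAddCommGroup E] [NormedSpace ℝ E] {K : Set E}

lemma exists_mem_frontier_of_ray_exits (hcl : IsClosed K) {z d : E} {T : ℝ} (hT : 0 ≤ T)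
    (hz : z ∈ K) (hTK : z + T • d ∉ K) : ∃ t, 0 ≤ t ∧ t < T ∧ z + t • d ∈ frontier K := by
  have hcont : ContinuousOn (fun t : ℝ => z + t • d) (Icc 0 T) := by fun_prop
  obtain ⟨_, ⟨t, ⟨h0, hle⟩, rfl⟩, ht⟩ := inter_frontier_nonempty_of_isPreconnected
    (isPreconnected_Icc.image _ hcont) (K := K)
    ⟨z, ⟨0, ⟨le_rfl, hT⟩, by simp⟩, hz⟩ ⟨_, ⟨T, ⟨hT, le_rfl⟩, rfl⟩, hTK⟩
  exact ⟨t, h0, hle.lt_of_ne fun h => hTK (h ▸ hcl.frontier_subset ht), ht⟩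

lemma exists_pos_mem_frontier_of_ray_exits (hcl : IsClosed K) {z d : E} {T : ℝ} (hT : 0 ≤ T)
    (hz : z ∈ interior K) (hTK : z + T • d ∉ K) :
    ∃ t, 0 < t ∧ t < T ∧ z + t • d ∈ frontier K := by
  obtain ⟨t, h0, htT, ht⟩ := exists_mem_frontier_of_ray_exits hcl hT (interior_subset hz) hTK
  refine ⟨t, h0.lt_of_ne ?_, htT, ht⟩
  rintro rfl
  exact ht.2 (by simpa using hz)

lemma add_smul_mem_interior_of_lt (hK : Convex ℝ K) {z d : E} {s t : ℝ} (hz : z ∈ interior K)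
    (h0 : 0 ≤ s) (hst : s < t) (ht : z + t • d ∈ K) : z + s • d ∈ interior K := by
  have htpos : 0 < t := h0.trans_lt hst
  have hmem := hK.add_smul_sub_mem_interior ht hz (t := 1 - s / t)
    ⟨by rwa [sub_pos, div_lt_one htpos], by linarith [div_nonneg h0 htpos.le]⟩
  convert hmem using 1
  match_scalars
  · ring
  · field_simp
    ring

lemma add_smul_notMem_of_lt (hK : Convex ℝ K) {z d : E} {s t : ℝ} (hz : z ∈ interior K)
    (h0 : 0 ≤ s) (hst : s < t) (hs : z + s • d ∈ frontier K) : z + t • d ∉ K :=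
  fun h => hs.2 (add_smul_mem_interior_of_lt hK hz h0 hst h)

lemma closure_interior_eq_self (hK : Convex ℝ K) (hcl : IsClosed K)
    (hint : (interior K).Nonempty) : closure (interior K) = K := by
  rw [hK.closure_interior_eq_closure_of_nonempty_interior hint, hcl.closure_eq]

end ConvexSets

section InwardNormals

variable {E : Type*} [NormedAddCommGroup E] [InnerProductSpace ℝ E] {K : Set E}

lemma exists_inward_normal [CompleteSpace E] (hK : Convex ℝ K) {p : E} (hp : p ∈ frontier K) :
    ∃ N : E, ∀ x ∈ interior K, ⟪p, N⟫ < ⟪x, N⟫ := by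
  obtain ⟨f, hf⟩ := geometric_hahn_banach_point_open hK.interior isOpen_interior hp.2
  refine ⟨(InnerProductSpace.toDual ℝ E).symm f, fun x hx => ?_⟩
  simpa only [real_inner_comm ((InnerProductSpace.toDual ℝ E).symm f),
    InnerProductSpace.toDual_symm_apply] using hf x hx

lemma inner_le_of_inward_normal (hK : Convex ℝ K) (hcl : IsClosed K)
    (hint : (interior K).Nonempty) {p N : E} (hN : ∀ x ∈ interior K, ⟪p, N⟫ < ⟪x, N⟫) {x : E}
    (hx : x ∈ K) : ⟪p, N⟫ ≤ ⟪x, N⟫ := by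
  have hclosed : IsClosed {x : E | ⟪p, N⟫ ≤ ⟪x, N⟫} := isClosed_le (by fun_prop) (by fun_prop)
  rw [← closure_interior_eq_self hK hcl hint] at hx
  exact hclosed.closure_subset_iff.2 (fun x hx => (hN x hx).le) hx

end InwardNormals

section BarrierCone

open Filter Topology

variable {E : Type*} [NormedAddCommGroup E] [InnerProductSpace ℝ E] {K : Set E} {y : E}

/-- The interior of the barrier cone of `K`, described by a linear rate of decay: the directions
`y` for which `⟪x, y⟫` tends to `-∞` at least linearly as `x → ∞` in `K`. -/
def strictBarrierCone (K : Set E) : Set E :=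
  {y | ∃ c > 0, ∃ C : ℝ, ∀ x ∈ K, ⟪x, y⟫ ≤ C - c * ‖x‖}

lemma isOpen_strictBarrierCone (K : Set E) : IsOpen (strictBarrierCone K) := by
  rw [Metric.isOpen_iff]
  rintro y ⟨c, hc, C, h⟩
  refine ⟨c / 2, half_pos hc, fun y' hy' => ⟨c / 2, half_pos hc, C, fun x hx => ?_⟩⟩
  rw [mem_ball, dist_eq_norm] at hy'
  calc ⟪x, y'⟫ = ⟪x, y⟫ + ⟪x, y' - y⟫ := by rw [← inner_add_right, add_sub_cancel]
    _ ≤ (C - c * ‖x‖) + ‖x‖ * (c / 2) := add_le_add (h x hx)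
        ((real_inner_le_norm _ _).trans (by gcongr))
    _ = C - c / 2 * ‖x‖ := by ring

lemma add_mem_strictBarrierCone {y' : E} (hy : y ∈ strictBarrierCone K) {C' : ℝ}
    (hy' : ∀ x ∈ K, ⟪x, y'⟫ ≤ C') : y + y' ∈ strictBarrierCone K := by
  obtain ⟨c, hc, C, h⟩ := hy
  refine ⟨c, hc, C + C', fun x hx => ?_⟩
  rw [inner_add_right]
  linarith [h x hx, hy' x hx]

lemma smul_mem_strictBarrierCone (hy : y ∈ strictBarrierCone K) {t : ℝ} (ht : 0 < t) :
    t • y ∈ strictBarrierCone K := by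
  obtain ⟨c, hc, C, h⟩ := hy
  refine ⟨t * c, by positivity, t * C, fun x hx => ?_⟩
  rw [inner_smul_right]
  linarith [mul_le_mul_of_nonneg_left (h x hx) ht.le]

lemma exists_inner_le_of_mem_strictBarrierCone (hy : y ∈ strictBarrierCone K) :
    ∃ C, ∀ x ∈ K, ⟪x, y⟫ ≤ C := by
  obtain ⟨c, hc, C, h⟩ := hy
  exact ⟨C, fun x hx => (h x hx).trans (sub_le_self C (by positivity))⟩

lemma convex_strictBarrierCone (K : Set E) : Convex ℝ (strictBarrierCone K) := by
  rw [convex_iff_forall_pos]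
  intro y hy y' hy' a b ha hb _
  obtain ⟨C, hC⟩ := exists_inner_le_of_mem_strictBarrierCone (smul_mem_strictBarrierCone hy' hb)
  exact add_mem_strictBarrierCone (smul_mem_strictBarrierCone hy ha) hC

lemma exists_add_smul_notMem (hy : y ∈ strictBarrierCone K) (z : E) {d : E} (hd : d ≠ 0)
    (hdy : 0 ≤ ⟪d, y⟫) : ∃ T > (0 : ℝ), z + T • d ∉ K := by
  obtain ⟨c, hc, C, h⟩ := hy
  have hnorm : 0 < c * ‖d‖ := mul_pos hc (norm_pos_iff.2 hd)
  obtain ⟨T, hTpos, hT⟩ := ((eventually_gt_atTop (0 : ℝ)).and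
    ((tendsto_id.atTop_mul_const hnorm).eventually_gt_atTop (C - ⟪z, y⟫ + c * ‖z‖))).exists
  refine ⟨T, hTpos, fun hx => ?_⟩
  have hle := h _ hx
  rw [inner_add_left, real_inner_smul_left] at hle
  have hfar : T * ‖d‖ - ‖z‖ ≤ ‖z + T • d‖ := by
    have := norm_sub_norm_le (T • d) (-z)
    rwa [norm_neg, norm_smul, Real.norm_of_nonneg hTpos.le, sub_neg_eq_add,
      add_comm (T • d)] at this
  have hinner : 0 ≤ T * ⟪d, y⟫ := by positivity
  have hscaled := mul_le_mul_of_nonneg_left hfar hc.le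
  simp only [id_eq] at hT
  linarith

/-- Every ray parallel to the hyperplane `y⊥` leaves `K`; for closed convex `K` this says that the
slices of `K` by hyperplanes orthogonal to `y` are bounded. -/
def HasBoundedSlices (K : Set E) (y : E) : Prop :=
  ∀ z d : E, ⟪d, y⟫ = 0 → d ≠ 0 → ∃ T > (0 : ℝ), z + T • d ∉ K

lemma hasBoundedSlices_of_mem (hy : y ∈ strictBarrierCone K) : HasBoundedSlices K y :=
  fun z _ hdy hd => exists_add_smul_notMem hy z hd hdy.ge

lemma HasBoundedSlices.exists_mem_frontier (hy : HasBoundedSlices K y) (hcl : IsClosed K)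
    {z d : E} (hz : z ∈ interior K) (hdy : ⟪d, y⟫ = 0) (hd : d ≠ 0) :
    ∃ t > (0 : ℝ), ∃ s < (0 : ℝ), z + t • d ∈ frontier K ∧ z + s • d ∈ frontier K := by
  obtain ⟨T, hT, hTK⟩ := hy z d hdy hd
  obtain ⟨S, hS, hSK⟩ := hy z (-d) (by rw [inner_neg_left, hdy, neg_zero]) (neg_ne_zero.2 hd)
  obtain ⟨t, ht0, -, ht⟩ := exists_pos_mem_frontier_of_ray_exits hcl hT.le hz hTK
  obtain ⟨s, hs0, -, hs⟩ := exists_pos_mem_frontier_of_ray_exits hcl hS.le hz hSK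
  exact ⟨t, ht0, -s, neg_neg_of_pos hs0, ht, by rwa [neg_smul, ← smul_neg]⟩

lemma IsQuadratic.eq_zero_of_eq_zero_on_frontier_line {g : E → ℝ} (hg : IsQuadratic g)
    (hcl : IsClosed K) (hy : HasBoundedSlices K y) {z x : E} (hz : z ∈ interior K)
    (hxy : ⟪x, y⟫ = ⟪z, y⟫) (hgz : g z = 0)
    (hgf : ∀ t : ℝ, z + t • (x - z) ∈ frontier K → g (z + t • (x - z)) = 0) : g x = 0 := by
  rcases eq_or_ne x z with rfl | hxz
  · exact hgz
  obtain ⟨t, ht, s, hs, htf, hsf⟩ := hy.exists_mem_frontier hcl hz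
    (by rw [inner_sub_left, hxy, sub_self]) (sub_ne_zero.2 hxz)
  simpa using hg.eq_zero_on_line ht.ne' hs.ne (hs.trans ht).ne' hgz (hgf t htf) (hgf s hsf) 1

lemma HasBoundedSlices.eventually_exists_mem_frontier (hy : HasBoundedSlices K y)
    (hcl : IsClosed K) {z d : E} (hz : z ∈ interior K) (hdy : ⟪d, y⟫ = 0) (hd : d ≠ 0) :
    ∀ᶠ d' in 𝓝 d, ∃ t > (0 : ℝ), z + t • d' ∈ frontier K ∧ |⟪t • d', y⟫| ≤ 1 := by
  obtain ⟨T, hT, hTK⟩ := hy z d hdy hd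
  have hexit : ∀ᶠ d' in 𝓝 d, z + T • d' ∉ K :=
    (hcl.isOpen_compl.preimage (by fun_prop : Continuous fun d' => z + T • d')).mem_nhds hTK
  have hslab : ∀ᶠ d' in 𝓝 d, T * |⟪d', y⟫| < 1 :=
    (by fun_prop : Continuous fun d' => T * |⟪d', y⟫|).continuousAt.eventually_lt
      continuousAt_const (by simp [hdy])
  filter_upwards [hexit, hslab] with d' hd' hlt
  obtain ⟨t, ht0, htT, ht⟩ := exists_pos_mem_frontier_of_ray_exits hcl hT.le hz hd'
  refine ⟨t, ht0, ht, ?_⟩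
  calc |⟪t • d', y⟫| = t * |⟪d', y⟫| := by rw [real_inner_smul_left, abs_mul, abs_of_pos ht0]
    _ ≤ T * |⟪d', y⟫| := by gcongr
    _ ≤ 1 := hlt.le

-- Chords through `z` in directions close to `d` end in the slab, so `g` vanishes on a double cone
-- of lines through `z` in the plane spanned by `d` and `v`.
lemma IsQuadratic.eq_zero_of_eq_zero_on_frontier_slab {g : E → ℝ} (hg : IsQuadratic g)
    (hcl : IsClosed K) (hy : HasBoundedSlices K y) {z d : E} (hz : z ∈ interior K)
    (hdy : ⟪d, y⟫ = 0) (hd : d ≠ 0) (v : E) (hgz : g z = 0)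
    (hgf : ∀ a b : ℝ, z + (a • d + b • v) ∈ frontier K → |⟪a • d + b • v, y⟫| ≤ 1 →
      g (z + (a • d + b • v)) = 0) : g (z + v) = 0 := by
  have hpert (s : ℝ) : Tendsto (fun ε : ℝ => s • (d + ε • v)) (𝓝 0) (𝓝 (s • d)) :=
    (by fun_prop : Continuous fun ε : ℝ => s • (d + ε • v)).tendsto' 0 _ (by simp)
  have hray (s t ε : ℝ) : t • s • (d + ε • v) = (t * s) • d + (t * s * ε) • v := by module
  have hlines : ∀ᶠ ε : ℝ in 𝓝 0, ∀ r : ℝ, g (z + r • (d + ε • v)) = 0 := by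
    filter_upwards [(hpert 1).eventually
        (hy.eventually_exists_mem_frontier hcl hz (by simp [hdy]) (by simpa)),
      (hpert (-1)).eventually
        (hy.eventually_exists_mem_frontier hcl hz (by simp [hdy]) (by simpa))]
      with ε ⟨t, ht, htf, hty⟩ ⟨s, hs, hsf, hsy⟩
    rw [hray] at htf hty hsf hsy
    refine hg.eq_zero_on_line (s := t * 1) (t := s * (-1)) (by linarith) (by linarith)
      (by linarith) hgz ?_ ?_
    · simpa only [smul_add, smul_smul] using hgf _ _ htf hty
    · simpa only [smul_add, smul_smul] using hgf _ _ hsf hsy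
  obtain ⟨r, hr, hball⟩ := Metric.eventually_nhds_iff.1 hlines
  exact hg.eq_zero_of_eq_zero_on_double_cone hr fun ε hε => hball (by simpa using hε)

end BarrierCone

section SectionQuadratics

open Filter Topology

variable {E : Type*} [NormedAddCommGroup E] [InnerProductSpace ℝ E] {K : Set E} {D : E → ℝ}
  {y y' : E} {q q' : E → ℝ}

/-- `q` is a quadratic function cutting out the section of `K` by the hyperplane `⟪x, y⟫ = D y`:
it vanishes on the frontier of `K` and is positive in the interior of `K`. -/
structure IsSectionQuadratic (K : Set E) (D : E → ℝ) (y : E) (q : E → ℝ) : Prop where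
  isQuadratic : IsQuadratic q
  eq_zero : ∀ x ∈ frontier K, ⟪x, y⟫ = D y → q x = 0
  pos : ∀ x ∈ interior K, ⟪x, y⟫ = D y → 0 < q x

/-- The hyperplanes `⟪x, y⟫ = D y` and `⟪x, y'⟫ = D y'` meet in the interior of `K`. -/
def SectionsCross (K : Set E) (D : E → ℝ) (y y' : E) : Prop :=
  ∃ x ∈ interior K, ⟪x, y⟫ = D y ∧ ⟪x, y'⟫ = D y'

lemma IsSectionQuadratic.const_mul (hq : IsSectionQuadratic K D y q) {κ : ℝ} (hκ : 0 < κ) :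
    IsSectionQuadratic K D y fun x => κ * q x where
  isQuadratic := hq.isQuadratic.const_mul κ
  eq_zero x hx hxy := by rw [hq.eq_zero x hx hxy, mul_zero]
  pos x hx hxy := mul_pos hκ (hq.pos x hx hxy)

lemma IsSectionQuadratic.exists_eq_mul (hq : IsSectionQuadratic K D y q)
    (hq' : IsSectionQuadratic K D y' q') (hcl : IsClosed K) (hy : HasBoundedSlices K y)
    (hc : SectionsCross K D y y') :
    ∃ κ > 0, ∀ x, ⟪x, y⟫ = D y → ⟪x, y'⟫ = D y' → q x = κ * q' x := by
  obtain ⟨z, hz, hzy, hzy'⟩ := hc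
  have hpos := hq.pos z hz hzy
  have hpos' := hq'.pos z hz hzy'
  refine ⟨q z / q' z, by positivity, fun x hx hx' => sub_eq_zero.1 ?_⟩
  refine (hq.isQuadratic.sub (hq'.isQuadratic.const_mul _)).eq_zero_of_eq_zero_on_frontier_line
    hcl hy hz (hx.trans hzy.symm) (by field_simp; ring) fun t ht => ?_
  rw [hq.eq_zero _ ht (inner_lineMap_eq hzy hx t), hq'.eq_zero _ ht (inner_lineMap_eq hzy' hx' t),
    mul_zero, sub_zero]

lemma IsSectionQuadratic.mem_frontier_of_eq_zero (hq : IsSectionQuadratic K D y q)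
    (hcl : IsClosed K) (hy : HasBoundedSlices K y) {o z : E} (hz : z ∈ interior K)
    (hzy : ⟪z, y⟫ = D y) (hoy : ⟪o, y⟫ = D y) (hqo : q o = 0) : o ∈ frontier K := by
  have hqz := hq.pos z hz hzy
  have hne : o - z ≠ 0 := fun h => hqz.ne' (by rw [← sub_eq_zero.1 h, hqo])
  obtain ⟨t, ht, s, hs, htf, hsf⟩ := hy.exists_mem_frontier hcl hz
    (by rw [inner_sub_left, hoy, hzy, sub_self]) hne
  rcases eq_or_ne t 1 with rfl | ht1
  · simpa using htf
  have hqt := hq.eq_zero _ htf (inner_lineMap_eq hzy hoy t)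
  have hqs := hq.eq_zero _ hsf (inner_lineMap_eq hzy hoy s)
  have hqz0 := hq.isQuadratic.eq_zero_on_line (z := o) (d := o - z) (s := t - 1) (t := s - 1)
    (sub_ne_zero.2 ht1) (by linarith) (by linarith) hqo
    (by rw [← hqt]; congr 1; module) (by rw [← hqs]; congr 1; module) (-1)
  rw [neg_one_smul, neg_sub, add_sub_cancel] at hqz0
  exact absurd hqz0 hqz.ne'

end SectionQuadratics

section NormalDerivative

open Filter Topology

lemma mul_eq_mul_of_pos_imp_nonneg {V : Type*} [AddCommGroup V] [Module ℝ V] {l n : V →ₗ[ℝ] ℝ}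
    (h : ∀ v, 0 < l v → 0 ≤ n v) {v₀ : V} (hv₀ : 0 < l v₀) (v : V) : n v * l v₀ = n v₀ * l v := by
  set w := l v₀ • v - l v • v₀ with hw
  have hlw : l w = 0 := by
    simp only [hw, map_sub, map_smul, smul_eq_mul]
    ring
  have hnw : n w = 0 := by
    by_contra hne
    have := h ((-(n v₀ + 1) / n w) • w + v₀) (by simpa [hlw] using hv₀)
    rw [map_add, map_smul, smul_eq_mul, div_mul_cancel₀ _ hne] at this
    linarith
  simp only [hw, map_sub, map_smul, smul_eq_mul] at hnw
  linarith

lemma eventually_forall_quadratic_pos_on_segment {V : Type*} [AddCommGroup V] [Module ℝ V]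
    (B : V →ₗ[ℝ] V →ₗ[ℝ] ℝ) {l : V →ₗ[ℝ] ℝ} {v w : V} (hv : 0 < l v) (hw : 0 < l w) :
    ∀ᶠ t : ℝ in 𝓝 0, ∀ s ∈ Icc (0 : ℝ) 1,
      0 < l (v + s • (w - v)) + t * B (v + s • (w - v)) (v + s • (w - v)) := by
  refine isCompact_Icc.eventually_forall_of_forall_eventually fun s hs => ?_
  have hpos : 0 < l v + s * (l w - l v) := by
    rcases hs.1.eq_or_lt with rfl | h0
    · simpa using hv
    · nlinarith [mul_pos h0 hw, mul_nonneg (sub_nonneg.2 hs.2) hv.le]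
  simp only [map_add, map_sub, map_smul, LinearMap.add_apply, LinearMap.sub_apply,
    LinearMap.smul_apply, smul_eq_mul]
  refine continuousAt_const.eventually_lt (Continuous.continuousAt (by fun_prop)) ?_
  simpa using hpos

variable {E : Type*} [NormedAddCommGroup E] [InnerProductSpace ℝ E] {K : Set E} {D : E → ℝ}
  {y y' : E} {q q' : E → ℝ} {e z N : E} {B : E →ₗ[ℝ] E →ₗ[ℝ] ℝ} {l : E →ₗ[ℝ] ℝ}

lemma IsSectionQuadratic.linear_part_pos (hq : IsSectionQuadratic K D y q) (hcl : IsClosed K)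
    (hy : HasBoundedSlices K y) (he : e ∈ frontier K) (hey : ⟪e, y⟫ = D y) (hz : z ∈ interior K)
    (hzy : ⟪z, y⟫ = D y) (hB : ∀ v, q (e + v) = q e + l v + B v v) : 0 < l (z - e) := by
  have hne : z - e ≠ 0 := fun h => he.2 (by rwa [← sub_eq_zero.1 h])
  obtain ⟨t, ht, -, -, htf, -⟩ := hy.exists_mem_frontier hcl hz
    (by rw [inner_sub_left, hzy, hey, sub_self]) hne
  have hf (r : ℝ) : q (e + r • (z - e)) = r * l (z - e) + r ^ 2 * B (z - e) (z - e) := by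
    rw [hB, hq.eq_zero e he hey]
    simp only [map_smul, LinearMap.smul_apply, smul_eq_mul]
    ring
  have hexit : q (e + (1 + t) • (z - e)) = 0 := by
    rw [← hq.eq_zero _ htf (by
      simp [inner_add_left, real_inner_smul_left, inner_sub_left, hzy, hey])]
    congr 1
    module
  have hqz : 0 < q (e + (1 : ℝ) • (z - e)) := by
    rw [one_smul, add_sub_cancel]
    exact hq.pos z hz hzy
  rw [hf] at hexit hqz
  have hroot : l (z - e) + (1 + t) * B (z - e) (z - e) = 0 :=
    mul_left_cancel₀ (by linarith : 1 + t ≠ 0) (by linear_combination hexit)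
  have hneg : 0 < t * -B (z - e) (z - e) := by linarith
  linarith [(mul_pos_iff_of_pos_left ht).1 hneg]

lemma IsSectionQuadratic.exists_pos_add_smul_mem (hq : IsSectionQuadratic K D y q)
    (hK : Convex ℝ K) (hcl : IsClosed K) (hy : HasBoundedSlices K y) (he : e ∈ frontier K)
    (hey : ⟪e, y⟫ = D y) (hz : z ∈ interior K) (hzy : ⟪z, y⟫ = D y)
    (hB : ∀ v, q (e + v) = q e + l v + B v v) {v : E} (hvy : ⟪v, y⟫ = 0) (hlv : 0 < l v) :
    ∃ t > (0 : ℝ), e + t • v ∈ K := by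
  have hlz := hq.linear_part_pos hcl hy he hey hz hzy hB
  obtain ⟨t, htpos, ⟨ht0, ht1⟩⟩ := (((eventually_forall_quadratic_pos_on_segment B hlz
    hlv).filter_mono nhdsWithin_le_nhds).and (Ioo_mem_nhdsGT (zero_lt_one' ℝ))).exists
  refine ⟨t, ht0, ?_⟩
  by_contra hout
  have hstart : e + t • (z - e) ∈ interior K := by
    have := add_smul_mem_interior_of_lt hK (d := e - z) (s := 1 - t) hz (by linarith)
      (by linarith : 1 - t < 1) (by simpa using hcl.frontier_subset he)
    convert this using 1
    module
  obtain ⟨s, hs0, hs1, hs⟩ := exists_mem_frontier_of_ray_exits hcl (d := t • (v - (z - e)))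
    zero_le_one (interior_subset hstart) (by convert hout using 2; module)
  have hpoint : e + t • (z - e) + s • t • (v - (z - e)) =
      e + t • (z - e + s • (v - (z - e))) := by module
  rw [hpoint] at hs
  have hzero := hq.eq_zero _ hs
    (by simp [inner_add_left, real_inner_smul_left, inner_sub_left, hvy, hzy, hey])
  rw [hB, hq.eq_zero e he hey] at hzero
  simp only [map_smul, LinearMap.smul_apply, smul_eq_mul] at hzero
  linarith [mul_pos ht0 (htpos s ⟨hs0, hs1.le⟩)]

-- The odd part of `q` at a frontier point is its derivative there, and the section pins that
-- derivative down to the inward normal of `K` up to a positive factor.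
lemma IsSectionQuadratic.exists_odd_part_eq (hq : IsSectionQuadratic K D y q) (hK : Convex ℝ K)
    (hcl : IsClosed K) (hy : HasBoundedSlices K y) (he : e ∈ frontier K) (hey : ⟪e, y⟫ = D y)
    (hz : z ∈ interior K) (hzy : ⟪z, y⟫ = D y) (hN : ∀ x ∈ interior K, ⟪e, N⟫ < ⟪x, N⟫) :
    ∃ c > 0, ∀ v, ⟪v, y⟫ = 0 → q (e + v) - q (e - v) = c * ⟪v, N⟫ := by
  obtain ⟨B, l, hB⟩ := hq.isQuadratic.exists_expansion e
  have hlz := hq.linear_part_pos hcl hy he hey hz hzy hB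
  have hNz : 0 < ⟪z - e, N⟫ := by
    rw [inner_sub_left]
    linarith [hN z hz]
  refine ⟨2 * (l (z - e) / ⟪z - e, N⟫), by positivity, fun v hv => ?_⟩
  let S : Submodule ℝ E := LinearMap.ker (innerₛₗ ℝ y)
  have hmemS {w : E} : w ∈ S ↔ ⟪w, y⟫ = 0 := by
    rw [LinearMap.mem_ker, innerₛₗ_apply_apply, real_inner_comm]
  have hsign (w : S) (hw : 0 < l.domRestrict S w) : 0 ≤ (innerₛₗ ℝ N).domRestrict S w := by
    obtain ⟨t, ht, htK⟩ := hq.exists_pos_add_smul_mem hK hcl hy he hey hz hzy hB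
      (hmemS.1 w.2) hw
    have := inner_le_of_inward_normal hK hcl ⟨z, hz⟩ hN htK
    rw [inner_add_left, real_inner_smul_left] at this
    rw [LinearMap.domRestrict_apply, innerₛₗ_apply_apply, real_inner_comm]
    exact nonneg_of_mul_nonneg_right (by linarith) ht
  have hprop := mul_eq_mul_of_pos_imp_nonneg hsign
    (v₀ := ⟨z - e, hmemS.2 (by rw [inner_sub_left, hzy, hey, sub_self])⟩) hlz ⟨v, hmemS.2 hv⟩
  simp only [LinearMap.domRestrict_apply, innerₛₗ_apply_apply, real_inner_comm _ N] at hprop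
  rw [sub_eq_add_neg e v, hB, hB]
  simp only [map_neg, LinearMap.neg_apply, neg_neg]
  field_simp
  linear_combination -2 * hprop

lemma odd_coeff_eq_mul {κ c c' : ℝ} {o : E}
    (hqq' : ∀ x, ⟪x, y⟫ = D y → ⟪x, y'⟫ = D y' → q x = κ * q' x)
    (hc : ∀ v, ⟪v, y⟫ = 0 → q (o + v) - q (o - v) = c * ⟪v, N⟫)
    (hc' : ∀ v, ⟪v, y'⟫ = 0 → q' (o + v) - q' (o - v) = c' * ⟪v, N⟫)
    (ho : ⟪o, y⟫ = D y) (ho' : ⟪o, y'⟫ = D y') (hcross : SectionsCross K D y y')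
    (hN : ∀ x ∈ interior K, ⟪o, N⟫ < ⟪x, N⟫) : c = κ * c' := by
  obtain ⟨z, hz, hzy, hzy'⟩ := hcross
  have hNz : ⟪z - o, N⟫ ≠ 0 := by
    rw [inner_sub_left]
    exact (sub_pos.2 (hN z hz)).ne'
  have hperp {w : E} (hzw : ⟪z, w⟫ = D w) (how : ⟪o, w⟫ = D w) : ⟪z - o, w⟫ = 0 := by
    rw [inner_sub_left, hzw, how, sub_self]
  have hvy := hperp hzy ho
  have hvy' := hperp hzy' ho'
  refine mul_right_cancel₀ hNz ?_
  rw [mul_assoc, ← hc _ hvy, ← hc' _ hvy',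
    hqq' (o + (z - o)) (by rw [inner_add_left, hvy, ho, add_zero])
      (by rw [inner_add_left, hvy', ho', add_zero]),
    hqq' (o - (z - o)) (by rw [inner_sub_left, hvy, ho, sub_zero])
      (by rw [inner_sub_left, hvy', ho', sub_zero])]
  ring

-- At the common point `o` of the three hyperplanes either the common value of the `qᵢ` is nonzero,
-- or `o` lies on the frontier and the normal derivatives of the `qᵢ` at `o` can be compared.
lemma IsSectionQuadratic.eq_on_inter_of_eq_on_inter [CompleteSpace E] (hK : Convex ℝ K)
    (hcl : IsClosed K) {y₁ y₂ y₃ : E} {q₁ q₂ q₃ : E → ℝ} (hq₁ : IsSectionQuadratic K D y₁ q₁)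
    (hq₂ : IsSectionQuadratic K D y₂ q₂) (hq₃ : IsSectionQuadratic K D y₃ q₃)
    (hy₁ : HasBoundedSlices K y₁) (hy₂ : HasBoundedSlices K y₂) (hy₃ : HasBoundedSlices K y₃)
    (c₁₂ : SectionsCross K D y₁ y₂) (c₁₃ : SectionsCross K D y₁ y₃)
    (c₂₃ : SectionsCross K D y₂ y₃) (hy : LinearIndependent ℝ ![y₁, y₂, y₃])
    (h₁₂ : ∀ x, ⟪x, y₁⟫ = D y₁ → ⟪x, y₂⟫ = D y₂ → q₁ x = q₂ x)
    (h₁₃ : ∀ x, ⟪x, y₁⟫ = D y₁ → ⟪x, y₃⟫ = D y₃ → q₁ x = q₃ x) :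
    ∀ x, ⟪x, y₂⟫ = D y₂ → ⟪x, y₃⟫ = D y₃ → q₂ x = q₃ x := by
  obtain ⟨κ, -, h₂₃⟩ := hq₂.exists_eq_mul hq₃ hcl hy₂ c₂₃
  suffices hκ : κ = 1 by simpa only [hκ, one_mul] using h₂₃
  obtain ⟨o, ho₁, ho₂, ho₃⟩ := exists_inner_eq_three hy (D y₁) (D y₂) (D y₃)
  obtain ⟨z₂, hz₂, hz₂₁, hz₂₂⟩ := id c₁₂
  obtain ⟨z₃, hz₃, -, hz₃₃⟩ := id c₁₃
  by_cases hqo : q₁ o = 0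
  · have ho := hq₁.mem_frontier_of_eq_zero hcl hy₁ hz₂ hz₂₁ ho₁ hqo
    obtain ⟨N, hN⟩ := exists_inward_normal hK ho
    obtain ⟨a₁, ha₁, ho₁'⟩ := hq₁.exists_odd_part_eq hK hcl hy₁ ho ho₁ hz₂ hz₂₁ hN
    obtain ⟨a₂, -, ho₂'⟩ := hq₂.exists_odd_part_eq hK hcl hy₂ ho ho₂ hz₂ hz₂₂ hN
    obtain ⟨a₃, -, ho₃'⟩ := hq₃.exists_odd_part_eq hK hcl hy₃ ho ho₃ hz₃ hz₃₃ hN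
    have ha₁₂ : a₁ = 1 * a₂ :=
      odd_coeff_eq_mul (by simpa only [one_mul] using h₁₂) ho₁' ho₂' ho₁ ho₂ c₁₂ hN
    have ha₁₃ : a₁ = 1 * a₃ :=
      odd_coeff_eq_mul (by simpa only [one_mul] using h₁₃) ho₁' ho₃' ho₁ ho₃ c₁₃ hN
    have ha₂₃ : a₂ = κ * a₃ := odd_coeff_eq_mul h₂₃ ho₂' ho₃' ho₂ ho₃ c₂₃ hN
    exact mul_right_cancel₀ ha₁.ne' (by linear_combination κ * ha₁₃ - ha₂₃ - ha₁₂)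
  · refine mul_right_cancel₀ hqo ?_
    linear_combination κ * h₁₃ o ho₁ ho₃ - h₁₂ o ho₁ ho₂ - h₂₃ o ho₂ ho₃

end NormalDerivative

section FittingNormals

open Filter Topology

variable {E : Type*} [NormedAddCommGroup E] [InnerProductSpace ℝ E] {K : Set E} {D : E → ℝ}
  {Q Q' : E → ℝ} {y y₁ y₂ y₃ y₄ z : E}

/-- The section of `K` by `⟪x, y⟫ = D y` is bounded along lines and is cut out by a quadratic
function. -/
def HasBoundedQuadraticSection (K : Set E) (D : E → ℝ) (y : E) : Prop :=
  HasBoundedSlices K y ∧ ∃ q, IsSectionQuadratic K D y q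

/-- The normals `y` for which `Q` vanishes on the part of the frontier of `K` lying in the
hyperplane `⟪x, y⟫ = D y`. -/
def fittingNormals (K : Set E) (D : E → ℝ) (Q : E → ℝ) : Set E :=
  {y | ∀ x ∈ frontier K, ⟪x, y⟫ = D y → Q x = 0}

lemma fittingNormals_const_mul {c : ℝ} (hc : c ≠ 0) (Q : E → ℝ) :
    fittingNormals K D (fun x => c * Q x) = fittingNormals K D Q := by
  simp only [fittingNormals, mul_eq_zero, hc, false_or]

lemma exists_quadratic_mem_fittingNormals [CompleteSpace E] (hK : Convex ℝ K) (hcl : IsClosed K)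
    (hy₁ : HasBoundedQuadraticSection K D y₁) (hy₂ : HasBoundedQuadraticSection K D y₂)
    (hy₃ : HasBoundedQuadraticSection K D y₃) (c₁₂ : SectionsCross K D y₁ y₂)
    (c₁₃ : SectionsCross K D y₁ y₃) (c₂₃ : SectionsCross K D y₂ y₃)
    (hy : LinearIndependent ℝ ![y₁, y₂, y₃]) :
    ∃ Q : E → ℝ, IsQuadratic Q ∧ Q ≠ 0 ∧ y₁ ∈ fittingNormals K D Q ∧
      y₂ ∈ fittingNormals K D Q ∧ y₃ ∈ fittingNormals K D Q := by
  obtain ⟨hb₁, q₁, hq₁⟩ := hy₁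
  obtain ⟨hb₂, q₂, hq₂⟩ := hy₂
  obtain ⟨hb₃, q₃, hq₃⟩ := hy₃
  obtain ⟨κ₂, hκ₂, h₁₂⟩ := hq₁.exists_eq_mul hq₂ hcl hb₁ c₁₂
  obtain ⟨κ₃, hκ₃, h₁₃⟩ := hq₁.exists_eq_mul hq₃ hcl hb₁ c₁₃
  have hq₂' := hq₂.const_mul hκ₂
  have hq₃' := hq₃.const_mul hκ₃
  have h₂₃ := IsSectionQuadratic.eq_on_inter_of_eq_on_inter hK hcl hq₁ hq₂' hq₃' hb₁ hb₂ hb₃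
    c₁₂ c₁₃ c₂₃ hy h₁₂ h₁₃
  obtain ⟨Q, hQ, hQ₁, hQ₂, hQ₃⟩ := exists_quadratic_eq_on_three_hyperplanes hq₁.isQuadratic
    hq₂'.isQuadratic hq₃'.isQuadratic hy h₁₂ h₁₃ h₂₃
  refine ⟨Q, hQ, ?_, fun x hx hxy => (hQ₁ x hxy).trans (hq₁.eq_zero x hx hxy),
    fun x hx hxy => (hQ₂ x hxy).trans (hq₂'.eq_zero x hx hxy),
    fun x hx hxy => (hQ₃ x hxy).trans (hq₃'.eq_zero x hx hxy)⟩
  obtain ⟨z, hz, hzy, -⟩ := c₁₂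
  rintro rfl
  exact (hq₁.pos z hz hzy).ne (hQ₁ z hzy)

lemma IsQuadratic.eq_zero_of_mem_fittingNormals (hQ : IsQuadratic Q) (hcl : IsClosed K)
    (hb : HasBoundedSlices K y) (hy : y ∈ fittingNormals K D Q) (hz : z ∈ interior K)
    (hzy : ⟪z, y⟫ = D y) (hQz : Q z = 0) {x : E} (hx : ⟪x, y⟫ = D y) : Q x = 0 :=
  hQ.eq_zero_of_eq_zero_on_frontier_line hcl hb hz (hx.trans hzy.symm) hQz
    fun t ht => hy _ ht (inner_lineMap_eq hzy hx t)

lemma IsQuadratic.eq_zero_of_three_fittingNormals (hQ : IsQuadratic Q) (hcl : IsClosed K)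
    (hb₁ : HasBoundedSlices K y₁) (hb₂ : HasBoundedSlices K y₂) (hb₃ : HasBoundedSlices K y₃)
    (hy₁ : y₁ ∈ fittingNormals K D Q) (hy₂ : y₂ ∈ fittingNormals K D Q)
    (hy₃ : y₃ ∈ fittingNormals K D Q) (c₁₃ : SectionsCross K D y₁ y₃)
    (hy : LinearIndependent ℝ ![y₁, y₂, y₃]) (hz : z ∈ interior K) (hz₁ : ⟪z, y₁⟫ = D y₁)
    (hz₂ : ⟪z, y₂⟫ = D y₂) (hQz : Q z = 0) : Q = 0 := by
  have hQ₁ (x : E) (hx : ⟪x, y₁⟫ = D y₁) : Q x = 0 :=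
    hQ.eq_zero_of_mem_fittingNormals hcl hb₁ hy₁ hz hz₁ hQz hx
  have hQ₂ (x : E) (hx : ⟪x, y₂⟫ = D y₂) : Q x = 0 :=
    hQ.eq_zero_of_mem_fittingNormals hcl hb₂ hy₂ hz hz₂ hQz hx
  obtain ⟨w, hw, hw₁, hw₃⟩ := c₁₃
  have hQ₃ (x : E) (hx : ⟪x, y₃⟫ = D y₃) : Q x = 0 :=
    hQ.eq_zero_of_mem_fittingNormals hcl hb₃ hy₃ hw hw₃ (hQ₁ w hw₁) hx
  exact funext (hQ.eq_zero_of_eq_zero_on_three_hyperplanes hy hQ₁ hQ₂ hQ₃)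

lemma IsQuadratic.exists_eq_mul_of_three_fittingNormals (hQ : IsQuadratic Q)
    (hQ' : IsQuadratic Q') (hQ0 : Q ≠ 0) (hQ'0 : Q' ≠ 0) (hcl : IsClosed K)
    (hb₁ : HasBoundedSlices K y₁) (hb₂ : HasBoundedSlices K y₂) (hb₃ : HasBoundedSlices K y₃)
    (hy₁ : y₁ ∈ fittingNormals K D Q) (hy₂ : y₂ ∈ fittingNormals K D Q)
    (hy₃ : y₃ ∈ fittingNormals K D Q) (hy₁' : y₁ ∈ fittingNormals K D Q')
    (hy₂' : y₂ ∈ fittingNormals K D Q') (hy₃' : y₃ ∈ fittingNormals K D Q')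
    (c₁₂ : SectionsCross K D y₁ y₂) (c₁₃ : SectionsCross K D y₁ y₃)
    (hy : LinearIndependent ℝ ![y₁, y₂, y₃]) : ∃ c ≠ 0, Q' = fun x => c * Q x := by
  obtain ⟨z, hz, hz₁, hz₂⟩ := c₁₂
  have hQz : Q z ≠ 0 := fun h => hQ0
    (hQ.eq_zero_of_three_fittingNormals hcl hb₁ hb₂ hb₃ hy₁ hy₂ hy₃ c₁₃ hy hz hz₁ hz₂ h)
  have hfit {y : E} (h : y ∈ fittingNormals K D Q) (h' : y ∈ fittingNormals K D Q') :
      y ∈ fittingNormals K D fun x => Q' x - Q' z / Q z * Q x := fun x hx hxy => by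
    simp only [h x hx hxy, h' x hx hxy, mul_zero, sub_zero]
  have hdiff := (hQ'.sub (hQ.const_mul (Q' z / Q z))).eq_zero_of_three_fittingNormals hcl hb₁ hb₂
    hb₃ (hfit hy₁ hy₁') (hfit hy₂ hy₂') (hfit hy₃ hy₃') c₁₃ hy hz hz₁ hz₂ (by field_simp; ring)
  have heq : Q' = fun x => Q' z / Q z * Q x := funext fun x => sub_eq_zero.1 (congrFun hdiff x)
  refine ⟨Q' z / Q z, fun h0 => hQ'0 ?_, heq⟩
  rw [heq, h0]
  exact funext fun x => zero_mul _

lemma IsQuadratic.isSectionQuadratic_of_pos (hQ : IsQuadratic Q) (hK : Convex ℝ K)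
    (hcl : IsClosed K) (hb : HasBoundedSlices K y) (hy : y ∈ fittingNormals K D Q)
    (hz : z ∈ interior K) (hzy : ⟪z, y⟫ = D y) (hQz : 0 < Q z) : IsSectionQuadratic K D y Q := by
  refine ⟨hQ, hy, fun x hx hxy => ?_⟩
  by_contra! hneg
  obtain ⟨a, b, hab⟩ := hQ.exists_eq_on_line z (x - z)
  have hcont : Continuous fun t : ℝ => Q (z + t • (x - z)) := by
    simp only [hab]
    fun_prop
  obtain ⟨t, ht, hzero⟩ := intermediate_value_Icc' (zero_le_one' ℝ) hcont.continuousOn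
    (show (0 : ℝ) ∈ _ by simpa using ⟨hneg, hQz.le⟩)
  exact hQz.ne' (hQ.eq_zero_of_mem_fittingNormals hcl hb hy
    (hK.interior.add_smul_sub_mem hz hx ht) (inner_lineMap_eq hzy hxy t) hzero hzy)

lemma IsQuadratic.mem_fittingNormals_of_pos [CompleteSpace E] (hQ : IsQuadratic Q)
    (hK : Convex ℝ K) (hcl : IsClosed K) (hb₁ : HasBoundedSlices K y₁)
    (hb₂ : HasBoundedSlices K y₂) (hb₃ : HasBoundedSlices K y₃)
    (hy₄ : HasBoundedQuadraticSection K D y₄) (c₁₃ : SectionsCross K D y₁ y₃)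
    (c₁₄ : SectionsCross K D y₁ y₄) (c₂₄ : SectionsCross K D y₂ y₄)
    (c₃₄ : SectionsCross K D y₃ y₄) (h124 : LinearIndependent ℝ ![y₁, y₂, y₄])
    (h134 : LinearIndependent ℝ ![y₁, y₃, y₄]) (h234 : LinearIndependent ℝ ![y₂, y₃, y₄])
    (hy₁ : y₁ ∈ fittingNormals K D Q) (hy₂ : y₂ ∈ fittingNormals K D Q)
    (hy₃ : y₃ ∈ fittingNormals K D Q) (hz : z ∈ interior K) (hz₁ : ⟪z, y₁⟫ = D y₁)
    (hz₂ : ⟪z, y₂⟫ = D y₂) (hQz : 0 < Q z) : y₄ ∈ fittingNormals K D Q := by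
  have hQ₁ := hQ.isSectionQuadratic_of_pos hK hcl hb₁ hy₁ hz hz₁ hQz
  have hQ₂ := hQ.isSectionQuadratic_of_pos hK hcl hb₂ hy₂ hz hz₂ hQz
  have hQ₃ : IsSectionQuadratic K D y₃ Q := by
    obtain ⟨w, hw, hw₁, hw₃⟩ := c₁₃
    exact hQ.isSectionQuadratic_of_pos hK hcl hb₃ hy₃ hw hw₃ (hQ₁.pos w hw hw₁)
  obtain ⟨hb₄, r, hr⟩ := hy₄
  obtain ⟨κ, hκ, h₁₄⟩ := hQ₁.exists_eq_mul hr hcl hb₁ c₁₄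
  have hr' := hr.const_mul hκ
  have h₂₄ := IsSectionQuadratic.eq_on_inter_of_eq_on_inter hK hcl hQ₁ hQ₂ hr' hb₁ hb₂ hb₄
    ⟨z, hz, hz₁, hz₂⟩ c₁₄ c₂₄ h124 (fun _ _ _ => rfl) h₁₄
  have h₃₄ := IsSectionQuadratic.eq_on_inter_of_eq_on_inter hK hcl hQ₁ hQ₃ hr' hb₁ hb₃ hb₄
    c₁₃ c₁₄ c₃₄ h134 (fun _ _ _ => rfl) h₁₄
  intro x hx hxy
  have hdiff := (hQ.sub hr'.isQuadratic).eq_zero_on_hyperplane h124 h134 h234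
    (fun x h₄ h₁ => sub_eq_zero.2 (h₁₄ x h₁ h₄)) (fun x h₄ h₂ => sub_eq_zero.2 (h₂₄ x h₂ h₄))
    (fun x h₄ h₃ => sub_eq_zero.2 (h₃₄ x h₃ h₄)) hxy
  rw [sub_eq_zero.1 hdiff, hr'.eq_zero x hx hxy]

lemma IsQuadratic.mem_fittingNormals_of_three [CompleteSpace E] (hQ : IsQuadratic Q)
    (hQ0 : Q ≠ 0) (hK : Convex ℝ K) (hcl : IsClosed K) (hb₁ : HasBoundedSlices K y₁)
    (hb₂ : HasBoundedSlices K y₂) (hb₃ : HasBoundedSlices K y₃)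
    (hy₄ : HasBoundedQuadraticSection K D y₄) (c₁₂ : SectionsCross K D y₁ y₂)
    (c₁₃ : SectionsCross K D y₁ y₃) (c₁₄ : SectionsCross K D y₁ y₄)
    (c₂₄ : SectionsCross K D y₂ y₄) (c₃₄ : SectionsCross K D y₃ y₄)
    (h123 : LinearIndependent ℝ ![y₁, y₂, y₃]) (h124 : LinearIndependent ℝ ![y₁, y₂, y₄])
    (h134 : LinearIndependent ℝ ![y₁, y₃, y₄]) (h234 : LinearIndependent ℝ ![y₂, y₃, y₄])
    (hy₁ : y₁ ∈ fittingNormals K D Q) (hy₂ : y₂ ∈ fittingNormals K D Q)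
    (hy₃ : y₃ ∈ fittingNormals K D Q) : y₄ ∈ fittingNormals K D Q := by
  obtain ⟨z, hz, hz₁, hz₂⟩ := c₁₂
  have hQz : Q z ≠ 0 := fun h => hQ0
    (hQ.eq_zero_of_three_fittingNormals hcl hb₁ hb₂ hb₃ hy₁ hy₂ hy₃ c₁₃ h123 hz hz₁ hz₂ h)
  rcases hQz.lt_or_gt with hneg | hpos
  · rw [← fittingNormals_const_mul (neg_ne_zero.2 one_ne_zero) Q] at hy₁ hy₂ hy₃ ⊢
    exact (hQ.const_mul (-1)).mem_fittingNormals_of_pos hK hcl hb₁ hb₂ hb₃ hy₄ c₁₃ c₁₄ c₂₄ c₃₄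
      h124 h134 h234 hy₁ hy₂ hy₃ hz hz₁ hz₂ (by linarith)
  · exact hQ.mem_fittingNormals_of_pos hK hcl hb₁ hb₂ hb₃ hy₄ c₁₃ c₁₄ c₂₄ c₃₄ h124 h134 h234
      hy₁ hy₂ hy₃ hz hz₁ hz₂ hpos

lemma eventually_exists_mem_inner_eq (hy : y ≠ 0) (hD : ContinuousAt D y) {c : E}
    (hc : ⟪c, y⟫ = D y) {U : Set E} (hU : U ∈ 𝓝 c) : ∀ᶠ y' in 𝓝 y, ∃ c' ∈ U, ⟪c', y'⟫ = D y' := by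
  have hyy : ⟪y, y⟫ ≠ 0 := inner_self_ne_zero.2 hy
  have hne : ∀ᶠ y' in 𝓝 y, ⟪y, y'⟫ ≠ 0 :=
    (by fun_prop : ContinuousAt (fun y' => ⟪y, y'⟫) y).eventually_ne hyy
  have hcont : ContinuousAt (fun y' => c + ((D y' - ⟪c, y'⟫) / ⟪y, y'⟫) • y) y :=
    continuousAt_const.add (((hD.sub (by fun_prop)).div (by fun_prop) hyy).smul continuousAt_const)
  have hmem := hcont.eventually_mem (s := U) (by simpa [hc] using hU)
  filter_upwards [hne, hmem] with y' hy' hU'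
  refine ⟨_, hU', ?_⟩
  rw [inner_add_left, real_inner_smul_left, div_mul_cancel₀ _ hy', add_sub_cancel]

lemma eventually_exists_mem_frontier_inner_eq (hK : Convex ℝ K) (hcl : IsClosed K) (hy : y ≠ 0)
    (hD : ContinuousAt D y) (hz : z ∈ interior K) (hzy : ⟪z, y⟫ = D y) {p : E}
    (hp : p ∈ frontier K) (hpy : ⟪p, y⟫ = D y) {η : ℝ} (hη : 0 < η) :
    ∀ᶠ y' in 𝓝 y, ∃ x ∈ frontier K ∩ ball p η, ⟪x, y'⟫ = D y' := by
  have hnear : ∀ᶠ t : ℝ in 𝓝 1, 0 < t ∧ z + t • (p - z) ∈ ball p η :=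
    (eventually_gt_nhds zero_lt_one).and (Continuous.continuousAt (by fun_prop)
      |>.eventually_mem (by simpa using ball_mem_nhds p hη))
  obtain ⟨s, ⟨hs0, hsp⟩, hs1⟩ := ((hnear.filter_mono nhdsWithin_le_nhds).and
    (self_mem_nhdsWithin (s := Iio (1 : ℝ)))).exists
  obtain ⟨t, ⟨-, htp⟩, ht1⟩ := ((hnear.filter_mono nhdsWithin_le_nhds).and
    (self_mem_nhdsWithin (s := Ioi (1 : ℝ)))).exists
  have hsK : z + s • (p - z) ∈ interior K :=
    add_smul_mem_interior_of_lt hK hz hs0.le hs1 (by simpa using hcl.frontier_subset hp)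
  have htK : z + t • (p - z) ∉ K :=
    add_smul_notMem_of_lt hK hz zero_le_one ht1 (by simpa using hp)
  filter_upwards [eventually_exists_mem_inner_eq hy hD (inner_lineMap_eq hzy hpy s)
      ((isOpen_interior.inter isOpen_ball).mem_nhds ⟨hsK, hsp⟩),
    eventually_exists_mem_inner_eq hy hD (inner_lineMap_eq hzy hpy t)
      ((hcl.isOpen_compl.inter isOpen_ball).mem_nhds ⟨htK, htp⟩)]
    with y' ⟨a, ⟨haK, hap⟩, hay⟩ ⟨b, ⟨hbK, hbp⟩, hby⟩
  obtain ⟨r, hr0, hr1, hr⟩ := exists_mem_frontier_of_ray_exits hcl (d := b - a) zero_le_one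
    (interior_subset haK) (by rwa [one_smul, add_sub_cancel])
  exact ⟨_, ⟨hr, (convex_ball p η).add_smul_sub_mem hap hbp ⟨hr0, hr1.le⟩⟩,
    inner_lineMap_eq hay hby r⟩

lemma IsQuadratic.mem_fittingNormals_of_mem_closure [FiniteDimensional ℝ E] (hQ : IsQuadratic Q)
    (hK : Convex ℝ K) (hcl : IsClosed K) (hy : y ≠ 0) (hD : ContinuousAt D y)
    (hz : z ∈ interior K) (hzy : ⟪z, y⟫ = D y) (hyc : y ∈ closure (fittingNormals K D Q)) :
    y ∈ fittingNormals K D Q := by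
  intro p hp hpy
  suffices p ∈ closure {x | Q x = 0} by
    rwa [(isClosed_eq hQ.continuous continuous_const).closure_eq] at this
  rw [Metric.mem_closure_iff]
  intro η hη
  obtain ⟨y', ⟨x, ⟨hxf, hxp⟩, hxy'⟩, hy'⟩ := ((eventually_exists_mem_frontier_inner_eq hK hcl hy hD
    hz hzy hp hpy hη).and_frequently (mem_closure_iff_frequently.1 hyc)).exists
  exact ⟨x, hy' x hxf hxy', mem_ball'.1 hxp⟩

end FittingNormals

section LevelSets

open Filter Topology

variable {W : Type*} [NormedAddCommGroup W] [NormedSpace ℝ W]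

lemma infinite_level_of_lt_of_lt (hdim : 1 < Module.rank ℝ W) {x : W} {r : ℝ} {φ : W → ℝ}
    (hφ : ContinuousOn φ (ball x r)) {a b : W} (ha : a ∈ ball x r) (hb : b ∈ ball x r) {c : ℝ}
    (hac : φ a < c) (hcb : c < φ b) : {w ∈ ball x r | φ w = c}.Infinite := by
  intro hfin
  let e := OpenPartialHomeomorph.univBall x r
  have htarget : e.target = ball x r :=
    OpenPartialHomeomorph.univBall_target x (pos_of_mem_ball ha)
  have hinj : InjOn e univ := by
    rw [← OpenPartialHomeomorph.univBall_source x r]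
    exact e.injOn
  have hconn := ((hfin.preimage (hinj.mono (subset_univ _))).countable
    |>.isConnected_compl_of_one_lt_rank hdim).isPreconnected.image e
    (OpenPartialHomeomorph.continuous_univBall x r).continuousOn
  have hsub : e '' (e ⁻¹' {w ∈ ball x r | φ w = c})ᶜ ⊆ ball x r := by
    rintro _ ⟨w, -, rfl⟩
    rw [← htarget]
    exact e.map_source (by rw [OpenPartialHomeomorph.univBall_source]; trivial)
  have hmem {w : W} (hw : w ∈ ball x r) (hwc : φ w ≠ c) :
      w ∈ e '' (e ⁻¹' {w ∈ ball x r | φ w = c})ᶜ := by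
    have hright := e.right_inv (htarget.symm ▸ hw)
    exact ⟨e.symm w, fun h => hwc (hright ▸ h.2), hright⟩
  obtain ⟨_, ⟨v, hv, rfl⟩, hvc⟩ := hconn.intermediate_value (hmem ha hac.ne) (hmem hb hcb.ne')
    (hφ.mono hsub) ⟨hac.le, hcb.le⟩
  exact hv ⟨hsub ⟨v, hv, rfl⟩, hvc⟩

lemma exists_infinite_level (hdim : 1 < Module.rank ℝ W) {O : Set W} (hO : IsOpen O)
    (hne : O.Nonempty) {φ : W → ℝ} (hφ : ContinuousOn φ O) :
    ∃ c, {w ∈ O | φ w = c}.Infinite := by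
  obtain ⟨x, hx⟩ := hne
  obtain ⟨r, hr, hrO⟩ := Metric.isOpen_iff.1 hO x hx
  suffices ∃ c, {w ∈ ball x r | φ w = c}.Infinite by
    obtain ⟨c, hc⟩ := this
    exact ⟨c, hc.mono fun w hw => ⟨hrO hw.1, hw.2⟩⟩
  by_cases hconst : ∀ a ∈ ball x r, φ a = φ x
  · have : Nontrivial W := (rank_pos_iff_nontrivial (R := ℝ)).1 (zero_lt_one.trans hdim)
    have : (𝓝[≠] x).NeBot := Module.punctured_nhds_neBot ℝ W x
    exact ⟨φ x, (infinite_of_mem_nhds x (ball_mem_nhds x hr)).mono fun w hw => ⟨hw, hconst w hw⟩⟩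
  · push Not at hconst
    obtain ⟨a, ha, hne⟩ := hconst
    rcases hne.lt_or_gt with h | h
    · obtain ⟨c, hac, hcx⟩ := exists_between h
      exact ⟨c, infinite_level_of_lt_of_lt hdim (hφ.mono hrO) ha (mem_ball_self hr) hac hcx⟩
    · obtain ⟨c, hxc, hca⟩ := exists_between h
      exact ⟨c, infinite_level_of_lt_of_lt hdim (hφ.mono hrO) (mem_ball_self hr) ha hxc hca⟩

lemma ordConnected_setOf_infinite_level (hdim : 1 < Module.rank ℝ W) {x : W} {ρ : ℝ}
    {φ : W → ℝ} (hφ : ContinuousOn φ (ball x ρ)) :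
    {c | {w ∈ ball x ρ | φ w = c}.Infinite}.OrdConnected := by
  refine ⟨fun c₁ h₁ c₂ h₂ c hc => ?_⟩
  rcases hc.1.eq_or_lt with rfl | hc₁
  · exact h₁
  rcases hc.2.eq_or_lt with rfl | hc₂
  · exact h₂
  obtain ⟨a, ha, rfl⟩ := h₁.nonempty
  obtain ⟨b, hb, rfl⟩ := h₂.nonempty
  exact infinite_level_of_lt_of_lt hdim hφ ha hb hc₁ hc₂

end LevelSets

section GeneralPosition

open Filter Topology

variable {W : Type*} [NormedAddCommGroup W] [NormedSpace ℝ W]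

lemma dense_compl_line (hdim : 1 < Module.rank ℝ W) (p q : W) :
    Dense (line[ℝ, p, q] : Set W)ᶜ := by
  rw [← interior_eq_empty_iff_dense_compl]
  by_contra hne
  have htop : affineSpan ℝ (line[ℝ, p, q] : Set W) = ⊤ :=
    affineSpan_eq_top_of_nonempty_interior ((nonempty_iff_ne_empty.2 hne).mono
      (interior_mono (subset_convexHull ℝ _)))
  have hrank : Module.rank ℝ (vectorSpan ℝ {p, q}) ≤ 1 := collinear_pair ℝ p q
  rw [← direction_affineSpan, ← AffineSubspace.affineSpan_coe (line[ℝ, p, q]), htop,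
    AffineSubspace.direction_top, rank_top] at hrank
  exact hrank.not_gt hdim

variable [CompleteSpace W] {n : ℕ} {w : Fin n → W}

lemma exists_mem_affineIndependent_pairs (hdim : 1 < Module.rank ℝ W)
    (hw : Function.Injective w) {x : W} {U : Set W} (hU : U ∈ 𝓝 x) :
    ∃ v ∈ U, (∀ i, v ≠ w i) ∧ ∀ i j, i < j → AffineIndependent ℝ ![w i, w j, v] := by
  have hdense : Dense (⋂ ij : Fin n × Fin n, (line[ℝ, w ij.1, w ij.2] : Set W)ᶜ) :=
    dense_iInter_of_isOpen
      (fun ij => (AffineSubspace.closed_of_finiteDimensional line[ℝ, w ij.1, w ij.2]).isOpen_compl)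
      fun ij => dense_compl_line hdim _ _
  obtain ⟨v, hv, hvU⟩ := hdense.inter_nhds_nonempty hU
  rw [mem_iInter] at hv
  refine ⟨v, hvU, fun i hi => hv (i, i) (hi ▸ left_mem_affineSpan_pair ℝ _ _), fun i j hij => ?_⟩
  exact affineIndependent_of_ne_of_mem_of_mem_of_notMem (hw.ne hij.ne)
    (left_mem_affineSpan_pair ℝ _ _) (right_mem_affineSpan_pair ℝ _ _) (hv (i, j))

lemma exists_injective_affineIndependent_triples (hdim : 1 < Module.rank ℝ W) (x : Fin n → W)
    {U : Fin n → Set W} (hU : ∀ i, U i ∈ 𝓝 (x i)) :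
    ∃ w : Fin n → W, (∀ i, w i ∈ U i) ∧ Function.Injective w ∧
      ∀ i j k, i < j → j < k → AffineIndependent ℝ ![w i, w j, w k] := by
  induction n with
  | zero => exact ⟨x, fun i => i.elim0, fun i => i.elim0, fun i => i.elim0⟩
  | succ n ih =>
    obtain ⟨w, hwU, hw, haff⟩ := ih (fun i => x i.castSucc) fun i => hU i.castSucc
    obtain ⟨v, hvU, hv, hvaff⟩ := exists_mem_affineIndependent_pairs hdim hw (hU (Fin.last n))
    refine ⟨Fin.snoc w v, Fin.lastCases (by simpa using hvU) (by simpa using hwU),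
      Fin.snoc_injective_of_injective hw fun ⟨i, hi⟩ => hv i hi.symm, fun i j k hij hjk => ?_⟩
    obtain ⟨j, rfl⟩ := Fin.exists_castSucc_eq.2 (hjk.trans_le (Fin.le_last k)).ne
    obtain ⟨i, rfl⟩ := Fin.exists_castSucc_eq.2 (hij.trans j.castSucc_lt_last).ne
    rw [Fin.castSucc_lt_castSucc_iff] at hij
    induction k using Fin.lastCases with
    | last => simpa using hvaff i j hij
    | cast k => simpa using haff i j k hij (Fin.castSucc_lt_castSucc_iff.1 hjk)

end GeneralPosition

section SmallSlopes

variable {W : Type*} [MetricSpace W]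

/-- Points of `X` are `R`-related as soon as the difference quotient of `φ` between them is smaller
than `κ`. -/
def RelatesSmallSlopes (X : Set W) (φ : W → ℝ) (κ : ℝ) (R : W → W → Prop) : Prop :=
  ∀ w ∈ X, ∀ w' ∈ X, w ≠ w' → |φ w - φ w'| < κ * dist w w' → R w w'

lemma RelatesSmallSlopes.rel_of_near_level {X : Set W} {φ : W → ℝ} {κ : ℝ} {R : W → W → Prop}
    (hR : RelatesSmallSlopes X φ κ R) (hκ : 0 < κ) {η c : ℝ} (hη : 0 < η) {a b : W} (ha : a ∈ X)
    (hb : b ∈ X) (hac : |φ a - c| < κ * η / 2) (hbc : |φ b - c| < κ * η / 2)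
    (hab : η ≤ dist a b) : R a b := by
  refine hR a ha b hb (dist_pos.1 (hη.trans_le hab)) ?_
  calc |φ a - φ b| ≤ |φ a - c| + |φ b - c| := by
        rw [abs_sub_comm (φ b)]
        exact abs_sub_le _ _ _
    _ < κ * η := by linarith
    _ ≤ κ * dist a b := by gcongr

lemma exists_forall_ne_le_dist {n : ℕ} {w : Fin (n + 1) → W} {η : ℝ}
    (hsep : ∀ i j, i ≠ j → 2 * η ≤ dist (w i) (w j)) (v : W) :
    ∃ i, ∀ j ≠ i, η ≤ dist (w j) v := by
  by_cases hnear : ∃ i, dist (w i) v < η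
  · obtain ⟨i, hi⟩ := hnear
    refine ⟨i, fun j hj => ?_⟩
    linarith [hsep j i hj, dist_triangle_right (w j) (w i) v]
  · push Not at hnear
    exact ⟨0, fun j _ => hnear j⟩

end SmallSlopes

section Patches

open Filter Topology

variable {W : Type*} [NormedAddCommGroup W] [NormedSpace ℝ W] {R : W → W → Prop} {n : ℕ}

/-- The points `w i` are pairwise related by `R` and no three of them are collinear. -/
structure InGeneralPosition (R : W → W → Prop) (w : Fin n → W) : Prop where
  rel : ∀ i j, i < j → R (w i) (w j)
  affineIndependent : ∀ i j k, i < j → j < k → AffineIndependent ℝ ![w i, w j, w k]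

lemma InGeneralPosition.comp {w : Fin n → W} (hw : InGeneralPosition R w) {m : ℕ}
    {f : Fin m → Fin n} (hf : StrictMono f) : InGeneralPosition R (w ∘ f) :=
  ⟨fun _ _ hij => hw.rel _ _ (hf hij),
    fun _ _ _ hij hjk => hw.affineIndependent _ _ _ (hf hij) (hf hjk)⟩

lemma InGeneralPosition.snoc {w : Fin n → W} (hw : InGeneralPosition R w) {v : W}
    (hv : ∀ i, R (w i) v) (haff : ∀ i j, i < j → AffineIndependent ℝ ![w i, w j, v]) :
    InGeneralPosition R (Fin.snoc w v : Fin (n + 1) → W) where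
  rel i j hij := by
    obtain ⟨i, rfl⟩ := Fin.exists_castSucc_eq.2 (hij.trans_le (Fin.le_last j)).ne
    induction j using Fin.lastCases with
    | last => simpa using hv i
    | cast j => simpa using hw.rel i j (Fin.castSucc_lt_castSucc_iff.1 hij)
  affineIndependent i j k hij hjk := by
    obtain ⟨j, rfl⟩ := Fin.exists_castSucc_eq.2 (hjk.trans_le (Fin.le_last k)).ne
    obtain ⟨i, rfl⟩ := Fin.exists_castSucc_eq.2 (hij.trans j.castSucc_lt_last).ne
    rw [Fin.castSucc_lt_castSucc_iff] at hij
    induction k using Fin.lastCases with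
    | last => simpa using haff i j hij
    | cast k => simpa using hw.affineIndependent i j k hij (Fin.castSucc_lt_castSucc_iff.1 hjk)

/-- A family `𝒢` of relatively closed subsets of `X` with the incidence properties of the sets of
normals fitted by quadratic functions: three points in general position lie in exactly one member,
and a member contains every point in general position with three of its points. -/
structure IsPatchSystem (X : Set W) (R : W → W → Prop) (𝒢 : Set (Set W)) : Prop where
  exists_patch : ∀ w : Fin 3 → W, (∀ i, w i ∈ X) → InGeneralPosition R w →
    ∃ G ∈ 𝒢, ∀ i, w i ∈ G
  last_mem : ∀ G ∈ 𝒢, ∀ w : Fin 4 → W, (∀ i, w i ∈ X) → InGeneralPosition R w →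
    (∀ i : Fin 3, w i.castSucc ∈ G) → w (Fin.last 3) ∈ G
  eq_of_mem : ∀ G ∈ 𝒢, ∀ G' ∈ 𝒢, ∀ w : Fin 3 → W, (∀ i, w i ∈ X) → InGeneralPosition R w →
    (∀ i, w i ∈ G) → (∀ i, w i ∈ G') → G = G'
  mem_of_mem_closure : ∀ G ∈ 𝒢, ∀ w ∈ X, w ∈ closure (G ∩ X) → w ∈ G

variable [CompleteSpace W]

lemma exists_separated_affineIndependent_near_level (hdim : 1 < Module.rank ℝ W) {κ : ℝ}
    (hκ : 0 < κ) {O : Set W} (hO : IsOpen O) {φ : W → ℝ} (hφ : ContinuousOn φ O) {c : ℝ}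
    (hinf : {w ∈ O | φ w = c}.Infinite) (n : ℕ) :
    ∃ η > (0 : ℝ), ∃ w : Fin n → W, Function.Injective w ∧ (∀ i, w i ∈ O) ∧
      (∀ i, |φ (w i) - c| < κ * η / 2) ∧ (∀ i j, i ≠ j → 2 * η ≤ dist (w i) (w j)) ∧
      ∀ i j k, i < j → j < k → AffineIndependent ℝ ![w i, w j, w k] := by
  let x : Fin n → W := fun i => hinf.natEmbedding _ i
  have hx (i : Fin n) : x i ∈ O ∧ φ (x i) = c := (hinf.natEmbedding _ i).2
  have hxinj : Function.Injective x := fun i j h =>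
    Fin.val_injective ((hinf.natEmbedding _).injective (Subtype.ext h))
  obtain ⟨η, hsep, hη⟩ : ∃ η : ℝ, (∀ i j, i ≠ j → 4 * η < dist (x i) (x j)) ∧ 0 < η := by
    have hsmall : ∀ᶠ η : ℝ in 𝓝 0, ∀ i j, i ≠ j → 4 * η < dist (x i) (x j) := by
      simp only [eventually_all]
      intro i j hij
      exact (by fun_prop : ContinuousAt (fun η : ℝ => 4 * η) 0).eventually_lt continuousAt_const
        (by simpa using dist_pos.2 (hxinj.ne hij))
    exact ((hsmall.filter_mono nhdsWithin_le_nhds).and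
      (self_mem_nhdsWithin (s := Ioi (0 : ℝ)))).exists
  have hU (i : Fin n) : {w | w ∈ O ∧ |φ w - c| < κ * η / 2 ∧ dist w (x i) < η} ∈ 𝓝 (x i) := by
    have hOi := hO.mem_nhds (hx i).1
    filter_upwards [hOi, Metric.tendsto_nhds.1 (hφ.continuousAt hOi) (κ * η / 2) (by positivity),
      ball_mem_nhds (x i) hη] with w hwO hwφ hwx
    exact ⟨hwO, by rwa [(hx i).2, Real.dist_eq] at hwφ, hwx⟩
  obtain ⟨w, hw, hinj, haff⟩ := exists_injective_affineIndependent_triples hdim x hU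
  refine ⟨η, hη, w, hinj, fun i => (hw i).1, fun i => (hw i).2.1, fun i j hij => ?_, haff⟩
  have htri := dist_triangle4 (x i) (w i) (w j) (x j)
  rw [dist_comm (x i) (w i)] at htri
  linarith [hsep i j hij, (hw i).2.2, (hw j).2.2]

lemma RelatesSmallSlopes.exists_inGeneralPosition {X : Set W} {φ : W → ℝ} {κ : ℝ}
    (hR : RelatesSmallSlopes X φ κ R) (hdim : 1 < Module.rank ℝ W) (hκ : 0 < κ)
    (hφ : ContinuousOn φ X) {O : Set W} (hO : IsOpen O) (hOX : O ⊆ X) (hne : O.Nonempty) (n : ℕ) :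
    ∃ w : Fin n → W, (∀ i, w i ∈ O) ∧ InGeneralPosition R w := by
  obtain ⟨c, hc⟩ := exists_infinite_level hdim hO hne (hφ.mono hOX)
  obtain ⟨η, hη, w, -, hwO, hwc, hsep, haff⟩ :=
    exists_separated_affineIndependent_near_level hdim hκ hO (hφ.mono hOX) hc n
  exact ⟨w, hwO, fun i j hij => hR.rel_of_near_level hκ hη (hOX (hwO i)) (hOX (hwO j)) (hwc i)
    (hwc j) (by linarith [hsep i j hij.ne]), haff⟩

variable {X : Set W} {𝒢 : Set (Set W)} {φ : W → ℝ} {κ : ℝ}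

-- Four points in general position near the level `c` lie in a common patch, and any further point
-- near that level is related to at least three of them.
lemma IsPatchSystem.exists_patch_near_level (h𝒢 : IsPatchSystem X R 𝒢)
    (hR : RelatesSmallSlopes X φ κ R) (hdim : 1 < Module.rank ℝ W) (hκ : 0 < κ) (hX : IsOpen X)
    (hφ : ContinuousOn φ X) {c : ℝ} (hc : {w ∈ X | φ w = c}.Infinite) :
    ∃ G ∈ 𝒢, ∃ ε > 0, ∀ w ∈ X, |φ w - c| < ε → w ∈ G := by
  obtain ⟨η, hη, w, hinj, hwX, hwc, hsep, haff⟩ :=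
    exists_separated_affineIndependent_near_level hdim hκ hX hφ hc 4
  have hgen : InGeneralPosition R w := ⟨fun i j hij => hR.rel_of_near_level hκ hη (hwX i) (hwX j)
    (hwc i) (hwc j) (by linarith [hsep i j hij.ne]), haff⟩
  obtain ⟨G, hG, hwG'⟩ := h𝒢.exists_patch (w ∘ Fin.castSucc) (fun i => hwX _)
    (hgen.comp Fin.strictMono_castSucc)
  have hwG : ∀ i, w i ∈ G := Fin.lastCases (h𝒢.last_mem G hG w hwX hgen hwG') hwG'
  refine ⟨G, hG, κ * η / 2, by positivity, fun u hu huc =>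
    h𝒢.mem_of_mem_closure G hG u hu (mem_closure_iff_nhds.2 fun V hV => ?_)⟩
  have hnear : {v | v ∈ X ∧ |φ v - c| < κ * η / 2} ∈ 𝓝 u :=
    (hφ.isOpen_inter_preimage hX (isOpen_ball (x := c) (ε := κ * η / 2))).mem_nhds ⟨hu, huc⟩
  obtain ⟨v, ⟨hvV, hvX, hvc⟩, -, hvaff⟩ :=
    exists_mem_affineIndependent_pairs hdim hinj (inter_mem hV hnear)
  obtain ⟨i, hi⟩ := exists_forall_ne_le_dist hsep v
  have hgen' := (hgen.comp i.strictMono_succAbove).snoc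
    (fun j => hR.rel_of_near_level hκ hη (hwX _) hvX (hwc _) hvc (hi _ (i.succAbove_ne j)))
    fun j k hjk => hvaff _ _ (i.strictMono_succAbove hjk)
  have hvG := h𝒢.last_mem G hG _ (Fin.lastCases (by rwa [Fin.snoc_last])
    fun j => by simpa using hwX _) hgen' fun j => by simpa using hwG _
  rw [Fin.snoc_last] at hvG
  exact ⟨v, hvV, hvG, hvX⟩

lemma eq_of_eventually_eq_of_isPreconnected {S α : Type*} [TopologicalSpace S] {I : Set S}
    (hI : IsPreconnected I) {f : S → α} (hf : ∀ x ∈ I, ∀ᶠ y in 𝓝[I] x, f x = f y) {x y : S}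
    (hx : x ∈ I) (hy : y ∈ I) : f x = f y :=
  hI.induction₂ (fun a b => f a = f b) hf (fun _ _ _ _ _ _ => Eq.trans)
    (fun _ _ _ _ => Eq.symm) hx hy

lemma IsPatchSystem.eq_of_near_levels (h𝒢 : IsPatchSystem X R 𝒢)
    (hR : RelatesSmallSlopes X φ κ R) (hdim : 1 < Module.rank ℝ W) (hκ : 0 < κ) (hX : IsOpen X)
    (hφ : ContinuousOn φ X) {G G' : Set W} (hG : G ∈ 𝒢) (hG' : G' ∈ 𝒢) {c c' ε ε' : ℝ}
    (hε' : 0 < ε') (hcG : ∀ w ∈ X, |φ w - c| < ε → w ∈ G)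
    (hcG' : ∀ w ∈ X, |φ w - c'| < ε' → w ∈ G') (hne : {w ∈ X | φ w = c'}.Nonempty)
    (hcc' : |c' - c| < ε) : G = G' := by
  have hopen (a δ : ℝ) : IsOpen {w | w ∈ X ∧ |φ w - a| < δ} :=
    hφ.isOpen_inter_preimage hX (isOpen_ball (x := a) (ε := δ))
  obtain ⟨u, hu, rfl⟩ := hne
  obtain ⟨w, hw, hgen⟩ := hR.exists_inGeneralPosition hdim hκ hφ ((hopen c ε).inter
    (hopen (φ u) ε')) (fun w hw => hw.1.1) ⟨u, ⟨hu, hcc'⟩, hu, by simpa using hε'⟩ 3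
  exact h𝒢.eq_of_mem G hG G' hG' w (fun i => (hw i).1.1) hgen
    (fun i => hcG _ (hw i).1.1 (hw i).1.2) fun i => hcG' _ (hw i).2.1 (hw i).2.2

lemma IsPatchSystem.exists_ball_subset {x : W} {ρ : ℝ} (h𝒢 : IsPatchSystem (ball x ρ) R 𝒢)
    (hR : RelatesSmallSlopes (ball x ρ) φ κ R) (hdim : 1 < Module.rank ℝ W) (hκ : 0 < κ)
    (hρ : 0 < ρ) (hφ : ContinuousOn φ (ball x ρ)) : ∃ G ∈ 𝒢, ball x ρ ⊆ G := by
  have hpatch := fun (c : {c | {w ∈ ball x ρ | φ w = c}.Infinite}) =>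
    h𝒢.exists_patch_near_level hR hdim hκ isOpen_ball hφ c.2
  choose G hG ε hε hcG using hpatch
  have hconst (c c' : {c | {w ∈ ball x ρ | φ w = c}.Infinite}) : G c = G c' := by
    refine eq_of_eventually_eq_of_isPreconnected (I := univ)
      (isPreconnected_iff_preconnectedSpace.1
        (ordConnected_setOf_infinite_level hdim hφ).isPreconnected).isPreconnected_univ
      (fun c _ => ?_) (mem_univ c) (mem_univ c')
    filter_upwards [mem_nhdsWithin_of_mem_nhds (ball_mem_nhds c (hε c))] with c' hc'
    exact h𝒢.eq_of_near_levels hR hdim hκ isOpen_ball hφ (hG c) (hG c') (hε c') (hcG c) (hcG c')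
      c'.2.nonempty hc'
  obtain ⟨c₀, hc₀⟩ := exists_infinite_level hdim isOpen_ball ⟨x, mem_ball_self hρ⟩ hφ
  refine ⟨G ⟨c₀, hc₀⟩, hG _, fun w hw => h𝒢.mem_of_mem_closure _ (hG _) w hw ?_⟩
  rw [_root_.mem_closure_iff]
  intro O hO hwO
  obtain ⟨c, hc⟩ := exists_infinite_level hdim (hO.inter isOpen_ball) ⟨w, hwO, hw⟩
    (hφ.mono inter_subset_right)
  obtain ⟨v, hv, hvc⟩ := hc.nonempty
  refine ⟨v, hv.1, ?_, hv.2⟩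
  rw [hconst ⟨c₀, hc₀⟩ ⟨c, hc.mono fun v hv => ⟨hv.1.2, hv.2⟩⟩]
  exact hcG _ v hv.2 (by simpa [hvc] using hε _)

end Patches

section LocalFit

open Filter Topology

variable {E : Type*} [NormedAddCommGroup E] [InnerProductSpace ℝ E] {K Ω : Set E} {D : E → ℝ}
  {p : E}

lemma inner_add_coe_orthogonal (w : (ℝ ∙ p)ᗮ) : ⟪p, p + (w : E)⟫ = ⟪p, p⟫ := by
  rw [inner_add_right, Submodule.mem_orthogonal_singleton_iff_inner_right.1 w.2, add_zero]

lemma add_coe_orthogonal_ne_zero (hp : p ≠ 0) (w : (ℝ ∙ p)ᗮ) : p + (w : E) ≠ 0 := by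
  intro h
  have hpp := inner_add_coe_orthogonal w
  rw [h, inner_zero_right] at hpp
  exact hp (inner_self_eq_zero.1 hpp.symm)

lemma linearIndependent_add_of_affineIndependent (hp : p ≠ 0) {ι : Type*} {w : ι → (ℝ ∙ p)ᗮ}
    (hw : AffineIndependent ℝ w) : LinearIndependent ℝ fun i => p + (w i : E) := by
  rw [linearIndependent_iff']
  intro s g hsum
  have hg : ∑ i ∈ s, g i = 0 := by
    have hinner := congrArg (fun x => ⟪p, x⟫) hsum
    simp only [inner_sum, inner_smul_right, inner_add_coe_orthogonal, inner_zero_right,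
      ← Finset.sum_mul] at hinner
    exact (mul_eq_zero.1 hinner).resolve_right (inner_self_ne_zero.2 hp)
  simp only [smul_add, Finset.sum_add_distrib, ← Finset.sum_smul, hg, zero_smul, zero_add] at hsum
  exact affineIndependent_iff.1 hw s g hg (Subtype.ext (by simpa using hsum))

lemma InGeneralPosition.linearIndependent_add {R : (ℝ ∙ p)ᗮ → (ℝ ∙ p)ᗮ → Prop} {n : ℕ}
    {w : Fin n → (ℝ ∙ p)ᗮ} (hw : InGeneralPosition R w) (hp : p ≠ 0) {i j k : Fin n} (hij : i < j)
    (hjk : j < k) : LinearIndependent ℝ ![p + (w i : E), p + (w j : E), p + (w k : E)] := by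
  convert linearIndependent_add_of_affineIndependent hp (hw.affineIndependent i j k hij hjk)
    using 1
  ext l
  fin_cases l <;> rfl

lemma exists_inner_eq_pair_norm_le (hp : p ≠ 0) {w w' : (ℝ ∙ p)ᗮ} (hne : w ≠ w') (a a' : ℝ) :
    ∃ v : E, ⟪v, p + (w : E)⟫ = a ∧ ⟪v, p + (w' : E)⟫ = a' ∧
      ‖v‖ * ‖p‖ ≤ |a| + |a - a'| / dist w w' * (‖w‖ + ‖p‖) := by
  have hpos : 0 < ‖p‖ := norm_pos_iff.2 hp
  have hpos' : 0 < ‖w - w'‖ := norm_pos_iff.2 (sub_ne_zero.2 hne)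
  set α := (a - a') / ‖w - w'‖ ^ 2
  set s := (a - α * ⟪w - w', w⟫) / ‖p‖ ^ 2
  have hinner (u : (ℝ ∙ p)ᗮ) :
      ⟪s • p + α • (w - w' : (ℝ ∙ p)ᗮ), p + (u : E)⟫ = s * ‖p‖ ^ 2 + α * ⟪w - w', u⟫ := by
    rw [inner_add_left, inner_smul_left, inner_add_coe_orthogonal, inner_smul_left,
      inner_add_right, Submodule.mem_orthogonal_singleton_iff_inner_left.1 (w - w').2, zero_add,
      real_inner_self_eq_norm_sq, Submodule.coe_inner]
    rfl
  have hs : s * ‖p‖ ^ 2 = a - α * ⟪w - w', w⟫ := div_mul_cancel₀ _ (pow_pos hpos 2).ne'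
  have hα : α * ‖w - w'‖ ^ 2 = a - a' := div_mul_cancel₀ _ (pow_pos hpos' 2).ne'
  refine ⟨s • p + α • (w - w' : (ℝ ∙ p)ᗮ), by rw [hinner, hs]; ring, ?_, ?_⟩
  · rw [hinner, hs]
    rw [← real_inner_self_eq_norm_sq, inner_sub_right] at hα
    linarith
  have hα' : |α| * ‖w - w'‖ = |a - a'| / ‖w - w'‖ := by
    rw [← hα, abs_mul, abs_of_pos (by positivity : 0 < ‖w - w'‖ ^ 2)]
    field_simp
  calc ‖s • p + α • ((w - w' : (ℝ ∙ p)ᗮ) : E)‖ * ‖p‖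
      ≤ (|s| * ‖p‖ + |α| * ‖w - w'‖) * ‖p‖ := by
        gcongr
        simpa only [norm_smul, Real.norm_eq_abs, Submodule.coe_norm] using
          norm_add_le (s • p) (α • ((w - w' : (ℝ ∙ p)ᗮ) : E))
    _ = |a - α * ⟪w - w', w⟫| + |α| * ‖w - w'‖ * ‖p‖ := by
        rw [← hs, abs_mul, abs_of_pos (by positivity : 0 < ‖p‖ ^ 2)]
        ring
    _ ≤ |a| + |α| * (‖w - w'‖ * ‖w‖) + |α| * ‖w - w'‖ * ‖p‖ := by
        gcongr
        refine (abs_sub _ _).trans ?_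
        rw [abs_mul]
        gcongr
        exact abs_real_inner_le_norm _ _
    _ = |a| + |a - a'| / dist w w' * (‖w‖ + ‖p‖) := by
        rw [dist_eq_norm, ← hα']
        ring

lemma sectionsCross_add_of_small_slope (hp : p ≠ 0) {z : E} {r : ℝ}
    (hr : ball z r ⊆ interior K) {w w' : (ℝ ∙ p)ᗮ} (hne : w ≠ w') (hw : ‖w‖ < ‖p‖)
    (hsmall : |⟪z, p + (w : E)⟫ - D (p + w)| < r * ‖p‖ / 4)
    (hslope : |(⟪z, p + (w : E)⟫ - D (p + w)) - (⟪z, p + (w' : E)⟫ - D (p + w'))| <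
      r / 4 * dist w w') :
    SectionsCross K D (p + w) (p + w') := by
  obtain ⟨v, hv, hv', hnorm⟩ := exists_inner_eq_pair_norm_le hp hne
    (⟪z, p + (w : E)⟫ - D (p + w)) (⟪z, p + (w' : E)⟫ - D (p + w'))
  refine ⟨z - v, hr ?_, by rw [inner_sub_left, hv]; ring, by rw [inner_sub_left, hv']; ring⟩
  rw [← div_lt_iff₀ (dist_pos.2 hne)] at hslope
  have hpos : 0 < ‖p‖ := norm_pos_iff.2 hp
  rw [mem_ball, dist_eq_norm, sub_sub_cancel_left, norm_neg]
  refine lt_of_mul_lt_mul_right (hnorm.trans_lt ?_) hpos.le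
  have hslope' := mul_le_mul hslope.le (add_le_add_left hw.le ‖p‖) (by positivity)
    ((by positivity : (0 : ℝ) ≤ _ / _).trans hslope.le)
  linarith [(abs_nonneg _).trans_lt hsmall]

/-- A positively homogeneous function `D`, continuous away from the origin, all of whose hyperplanes
`⟪x, y⟫ = D y` meet the interior of `K`. -/
structure IsTransversalHeight (K : Set E) (D : E → ℝ) : Prop where
  continuousAt : ∀ y ≠ 0, ContinuousAt D y
  map_smul : ∀ y, ∀ t > 0, D (t • y) = t * D y
  exists_mem_interior : ∀ y ≠ 0, ∃ z ∈ interior K, ⟪z, y⟫ = D y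

namespace IsTransversalHeight

lemma smul_mem_fittingNormals_iff (hD : IsTransversalHeight K D) {Q : E → ℝ} {y : E} {t : ℝ}
    (ht : 0 < t) : t • y ∈ fittingNormals K D Q ↔ y ∈ fittingNormals K D Q := by
  simp only [fittingNormals, mem_ofPred_eq, inner_smul_right, hD.map_smul y t ht,
    mul_right_inj' ht.ne']

-- The defect of the hyperplane of `p + w` at a fixed point of the central section serves as `φ`.
lemma exists_relatesSmallSlopes (hD : IsTransversalHeight K D) (hΩ : Ω ∈ 𝓝 p) (hp : p ≠ 0) :
    ∃ φ : (ℝ ∙ p)ᗮ → ℝ, Continuous φ ∧ ∃ κ > 0, ∃ ρ > 0,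
      (∀ w ∈ ball (0 : (ℝ ∙ p)ᗮ) ρ, p + (w : E) ∈ Ω) ∧
      RelatesSmallSlopes (ball 0 ρ) φ κ fun w w' => SectionsCross K D (p + w) (p + w') := by
  obtain ⟨z, hz, hzp⟩ := hD.exists_mem_interior p hp
  obtain ⟨r, hr, hrK⟩ := Metric.isOpen_iff.1 isOpen_interior z hz
  have hpos : 0 < ‖p‖ := norm_pos_iff.2 hp
  set φ : (ℝ ∙ p)ᗮ → ℝ := fun w => ⟪z, p + (w : E)⟫ - D (p + w)
  have hφ : Continuous φ := by
    refine continuous_iff_continuousAt.2 fun w => ContinuousAt.sub (by fun_prop) ?_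
    exact ContinuousAt.comp (f := fun w : (ℝ ∙ p)ᗮ => p + (w : E))
      (hD.continuousAt _ (add_coe_orthogonal_ne_zero hp w)) (by fun_prop)
  have hnear : ∀ᶠ w : (ℝ ∙ p)ᗮ in 𝓝 0, p + (w : E) ∈ Ω ∧ ‖w‖ < ‖p‖ ∧ |φ w| < r * ‖p‖ / 4 := by
    refine .and ?_ (.and ?_ ?_)
    · exact (by fun_prop : ContinuousAt (fun w : (ℝ ∙ p)ᗮ => p + (w : E)) 0).eventually_mem
        (by simpa using hΩ)
    · exact continuous_norm.continuousAt.eventually_lt continuousAt_const (by simpa using hpos)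
    · refine hφ.abs.continuousAt.eventually_lt continuousAt_const ?_
      simpa [φ, hzp] using mul_pos hr hpos
  obtain ⟨ρ, hρ, hball⟩ := Metric.eventually_nhds_iff_ball.1 hnear
  exact ⟨φ, hφ, r / 4, by positivity, ρ, hρ, fun w hw => (hball w hw).1,
    fun w hw w' _ hne hslope => sectionsCross_add_of_small_slope hp hrK hne (hball w hw).2.1
      (hball w hw).2.2 hslope⟩

lemma exists_sectionsCross_triple [CompleteSpace E] (hD : IsTransversalHeight K D)
    (hdim : 1 < Module.rank ℝ (ℝ ∙ p)ᗮ) (hΩ : Ω ∈ 𝓝 p) (hp : p ≠ 0) :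
    ∃ a ∈ Ω, ∃ b ∈ Ω, ∃ c ∈ Ω, SectionsCross K D a b ∧ SectionsCross K D a c ∧
      LinearIndependent ℝ ![a, b, c] := by
  obtain ⟨φ, hφ, κ, hκ, ρ, hρ, hball, hR⟩ := hD.exists_relatesSmallSlopes hΩ hp
  obtain ⟨w, hw, hgen⟩ := hR.exists_inGeneralPosition hdim hκ hφ.continuousOn isOpen_ball
    subset_rfl ⟨0, mem_ball_self hρ⟩ 3
  exact ⟨_, hball _ (hw 0), _, hball _ (hw 1), _, hball _ (hw 2), hgen.rel 0 1 (by decide),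
    hgen.rel 0 2 (by decide), hgen.linearIndependent_add hp (by decide) (by decide)⟩

variable [FiniteDimensional ℝ E]

lemma isPatchSystem (hD : IsTransversalHeight K D) (hK : Convex ℝ K) (hcl : IsClosed K)
    (hp : p ≠ 0) {X : Set (ℝ ∙ p)ᗮ} (hX : ∀ w ∈ X, HasBoundedQuadraticSection K D (p + w)) :
    IsPatchSystem X (fun w w' => SectionsCross K D (p + w) (p + w'))
      {G | ∃ Q, IsQuadratic Q ∧ Q ≠ 0 ∧
        G = {w : (ℝ ∙ p)ᗮ | p + (w : E) ∈ fittingNormals K D Q}} where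
  exists_patch w hw hgen := by
    obtain ⟨Q, hQ, hQ0, h₀, h₁, h₂⟩ := exists_quadratic_mem_fittingNormals hK hcl (hX _ (hw 0))
      (hX _ (hw 1)) (hX _ (hw 2)) (hgen.rel 0 1 (by decide)) (hgen.rel 0 2 (by decide))
      (hgen.rel 1 2 (by decide)) (hgen.linearIndependent_add hp (by decide) (by decide))
    exact ⟨_, ⟨Q, hQ, hQ0, rfl⟩, by simpa [Fin.forall_fin_succ] using ⟨h₀, h₁, h₂⟩⟩
  last_mem := by
    rintro _ ⟨Q, hQ, hQ0, rfl⟩ w hw hgen hwG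
    exact hQ.mem_fittingNormals_of_three hQ0 hK hcl (hX _ (hw 0)).1 (hX _ (hw 1)).1
      (hX _ (hw 2)).1 (hX _ (hw 3)) (hgen.rel 0 1 (by decide)) (hgen.rel 0 2 (by decide))
      (hgen.rel 0 3 (by decide)) (hgen.rel 1 3 (by decide)) (hgen.rel 2 3 (by decide))
      (hgen.linearIndependent_add hp (by decide) (by decide))
      (hgen.linearIndependent_add hp (by decide) (by decide))
      (hgen.linearIndependent_add hp (by decide) (by decide))
      (hgen.linearIndependent_add hp (by decide) (by decide)) (hwG 0) (hwG 1) (hwG 2)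
  eq_of_mem := by
    rintro _ ⟨Q, hQ, hQ0, rfl⟩ _ ⟨Q', hQ', hQ'0, rfl⟩ w hw hgen hwG hwG'
    obtain ⟨c, hc, rfl⟩ := hQ.exists_eq_mul_of_three_fittingNormals hQ' hQ0 hQ'0 hcl
      (hX _ (hw 0)).1 (hX _ (hw 1)).1 (hX _ (hw 2)).1 (hwG 0) (hwG 1) (hwG 2) (hwG' 0) (hwG' 1)
      (hwG' 2) (hgen.rel 0 1 (by decide)) (hgen.rel 0 2 (by decide))
      (hgen.linearIndependent_add hp (by decide) (by decide))
    rw [fittingNormals_const_mul hc]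
  mem_of_mem_closure := by
    rintro _ ⟨Q, hQ, -, rfl⟩ w - hw
    have hy := add_coe_orthogonal_ne_zero hp w
    obtain ⟨z, hz, hzw⟩ := hD.exists_mem_interior _ hy
    exact hQ.mem_fittingNormals_of_mem_closure hK hcl hy (hD.continuousAt _ hy) hz hzw
      (map_mem_closure (f := fun w : (ℝ ∙ p)ᗮ => p + (w : E)) (by fun_prop) hw fun v hv => hv.1)

lemma exists_fittingNormals_mem_nhds (hD : IsTransversalHeight K D)
    (hdim : 1 < Module.rank ℝ (ℝ ∙ p)ᗮ) (hK : Convex ℝ K) (hcl : IsClosed K) (hp : p ≠ 0)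
    (hΩ : ∀ᶠ y in 𝓝 p, HasBoundedQuadraticSection K D y) :
    ∃ Q, IsQuadratic Q ∧ Q ≠ 0 ∧ fittingNormals K D Q ∈ 𝓝 p := by
  obtain ⟨φ, hφ, κ, hκ, ρ, hρ, hball, hR⟩ := hD.exists_relatesSmallSlopes hΩ hp
  obtain ⟨_, ⟨Q, hQ, hQ0, rfl⟩, hsub⟩ := (hD.isPatchSystem hK hcl hp hball).exists_ball_subset hR
    hdim hκ hρ hφ.continuousOn
  refine ⟨Q, hQ, hQ0, ?_⟩
  have hpp : ⟪p, p⟫ ≠ 0 := inner_self_ne_zero.2 hp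
  have hinner : ContinuousAt (fun y : E => ⟪p, y⟫) p := by fun_prop
  have hproj : ContinuousAt (fun y : E => (⟪p, p⟫ / ⟪p, y⟫) • y - p) p :=
    ((continuousAt_const.div hinner hpp).smul continuousAt_id).sub continuousAt_const
  have hsmall : ∀ᶠ y in 𝓝 p, ‖(⟪p, p⟫ / ⟪p, y⟫) • y - p‖ < ρ :=
    hproj.norm.eventually_lt continuousAt_const
      (by rwa [div_self hpp, one_smul, sub_self, norm_zero])
  filter_upwards [hsmall, continuousAt_const.eventually_lt hinner (real_inner_self_pos.2 hp)]
    with y hyρ hy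
  have horth : (⟪p, p⟫ / ⟪p, y⟫) • y - p ∈ (ℝ ∙ p)ᗮ := by
    rw [Submodule.mem_orthogonal_singleton_iff_inner_right, inner_sub_right, inner_smul_right,
      div_mul_cancel₀ _ hy.ne', sub_self]
  have hmem : p + ((⟪p, p⟫ / ⟪p, y⟫) • y - p) ∈ fittingNormals K D Q :=
    hsub (mem_ball_zero_iff.2 hyρ : (⟨_, horth⟩ : (ℝ ∙ p)ᗮ) ∈ ball 0 ρ)
  rwa [add_sub_cancel, hD.smul_mem_fittingNormals_iff (div_pos (real_inner_self_pos.2 hp) hy)]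
    at hmem

lemma exists_subset_fittingNormals (hD : IsTransversalHeight K D)
    (hdim : 3 ≤ Module.finrank ℝ E) (hK : Convex ℝ K) (hcl : IsClosed K) (hΩ : IsOpen Ω)
    (hΩ0 : 0 ∉ Ω) (hconn : IsConnected Ω) (hgood : ∀ y ∈ Ω, HasBoundedQuadraticSection K D y) :
    ∃ Q, IsQuadratic Q ∧ Q ≠ 0 ∧ Ω ⊆ fittingNormals K D Q := by
  have hne0 {p : E} (hp : p ∈ Ω) : p ≠ 0 := fun h => hΩ0 (h ▸ hp)
  have hrank {p : E} (hp : p ∈ Ω) : 1 < Module.rank ℝ (ℝ ∙ p)ᗮ := by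
    apply Module.lt_rank_of_lt_finrank
    have hsum := Submodule.finrank_add_finrank_orthogonal (ℝ ∙ p)
    rw [finrank_span_singleton (hne0 hp)] at hsum
    lia
  have hlocal : ∀ p ∈ Ω, ∃ Q, IsQuadratic Q ∧ Q ≠ 0 ∧ fittingNormals K D Q ∈ 𝓝 p := fun p hp =>
    hD.exists_fittingNormals_mem_nhds (hrank hp) hK hcl (hne0 hp)
      (eventually_of_mem (hΩ.mem_nhds hp) hgood)
  choose! Q hQ hQ0 hQp using hlocal
  have hconst : ∀ p ∈ Ω, ∀ᶠ q in 𝓝[Ω] p, fittingNormals K D (Q p) = fittingNormals K D (Q q) := by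
    intro p hp
    filter_upwards [nhdsWithin_le_nhds (eventually_mem_nhds_iff.2 (hQp p hp)),
      self_mem_nhdsWithin] with q hqp hq
    obtain ⟨a, ha, b, hb, c, hc, hab, hac, hind⟩ := hD.exists_sectionsCross_triple (hrank hq)
      (inter_mem (inter_mem hqp (hQp q hq)) (hΩ.mem_nhds hq)) (hne0 hq)
    obtain ⟨k, hk, heq⟩ := (hQ p hp).exists_eq_mul_of_three_fittingNormals (hQ q hq) (hQ0 p hp)
      (hQ0 q hq) hcl (hgood a ha.2).1 (hgood b hb.2).1 (hgood c hc.2).1 ha.1.1 hb.1.1 hc.1.1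
      ha.1.2 hb.1.2 hc.1.2 hab hac hind
    rw [heq, fittingNormals_const_mul hk]
  obtain ⟨p, hp⟩ := hconn.nonempty
  refine ⟨Q p, hQ p hp, hQ0 p hp, fun y hy => ?_⟩
  have heq := eq_of_eventually_eq_of_isPreconnected (f := fun q => fittingNormals K D (Q q))
    hconn.isPreconnected hconst hp hy
  exact heq.symm ▸ mem_of_mem_nhds (hQp y hy)

end IsTransversalHeight

end LocalFit

section AsymptoticDirections

variable {E : Type*} [NormedAddCommGroup E] [InnerProductSpace ℝ E] {K : Set E} {y v : E}

lemma exists_unit_mem_asymptoticCone_of_notMem [FiniteDimensional ℝ E]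
    (hy : y ∉ strictBarrierCone K) {ε : ℝ} (hε : 0 < ε) :
    ∃ v ∈ sphere (0 : E) 1 ∩ asymptoticCone ℝ K, -ε ≤ ⟪v, y⟫ := by
  have hunbdd : ¬ Bornology.IsBounded {x ∈ K | -ε * ‖x‖ ≤ ⟪x, y⟫} := fun hb => hy <| by
    obtain ⟨M, hM, hbound⟩ := hb.exists_pos_norm_le
    refine ⟨ε, hε, M * ‖y‖ + ε * M, fun x hx => ?_⟩
    by_cases hxy : -ε * ‖x‖ ≤ ⟪x, y⟫
    · have hxM : ‖x‖ ≤ M := hbound x ⟨hx, hxy⟩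
      calc ⟪x, y⟫ ≤ ‖x‖ * ‖y‖ := real_inner_le_norm x y
        _ ≤ M * ‖y‖ + ε * (M - ‖x‖) := le_add_of_le_of_nonneg (by gcongr)
            (mul_nonneg hε.le (sub_nonneg.2 hxM))
        _ = M * ‖y‖ + ε * M - ε * ‖x‖ := by ring
    · linarith [show 0 ≤ M * ‖y‖ + ε * M by positivity]
  obtain ⟨v, hv0, hv⟩ := not_bounded_iff_exists_ne_zero_mem_asymptoticCone.1 hunbdd
  have hcone : asymptoticCone ℝ {x : E | -ε * ‖x‖ ≤ ⟪x, y⟫} = {x | -ε * ‖x‖ ≤ ⟪x, y⟫} := by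
    rw [asymptoticCone_eq_closure_of_forall_smul_mem,
      (isClosed_le (by fun_prop) (by fun_prop)).closure_eq]
    intro c hc x hx
    have hscaled := mul_le_mul_of_nonneg_left (mem_ofPred.1 hx) hc.le
    rwa [mem_ofPred_eq, norm_smul, Real.norm_of_nonneg hc.le, real_inner_smul_left, mul_left_comm]
  have hvy : -ε * ‖v‖ ≤ ⟪v, y⟫ := hcone.subset (asymptoticCone_mono (fun x hx => hx.2) hv)
  have hnorm : 0 < ‖v‖ := norm_pos_iff.2 hv0
  refine ⟨‖v‖⁻¹ • v, ⟨by simp [norm_smul, hnorm.ne'], smul_mem_asymptoticCone (by positivity)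
    (asymptoticCone_mono (fun x hx => hx.1) hv)⟩, ?_⟩
  rwa [real_inner_smul_left, ← div_eq_inv_mul, le_div_iff₀ hnorm]

lemma exists_mem_asymptoticCone_of_notMem [FiniteDimensional ℝ E]
    (hy : y ∉ strictBarrierCone K) : ∃ v ≠ 0, v ∈ asymptoticCone ℝ K ∧ 0 ≤ ⟪v, y⟫ := by
  have hcompact : IsCompact (sphere (0 : E) 1 ∩ asymptoticCone ℝ K) :=
    (isCompact_sphere 0 1).inter_right isClosed_asymptoticCone
  obtain ⟨u, hu, -⟩ := exists_unit_mem_asymptoticCone_of_notMem hy one_pos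
  obtain ⟨v, hv, hmax⟩ := hcompact.exists_isMaxOn ⟨u, hu⟩
    (by fun_prop : ContinuousOn (fun v : E => ⟪v, y⟫) _)
  refine ⟨v, ne_zero_of_mem_unit_sphere ⟨v, hv.1⟩, hv.2, le_of_forall_pos_le_add fun ε hε => ?_⟩
  obtain ⟨w, hw, hwy⟩ := exists_unit_mem_asymptoticCone_of_notMem hy hε
  linarith [isMaxOn_iff.1 hmax w hw]

lemma inner_neg_of_mem_asymptoticCone (hK : Convex ℝ K) (hcl : IsClosed K) (hne : K.Nonempty)
    (hv : v ∈ asymptoticCone ℝ K) (hv0 : v ≠ 0) (hy : y ∈ strictBarrierCone K) : ⟪v, y⟫ < 0 := by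
  by_contra! hnonneg
  obtain ⟨x, hx⟩ := hne
  obtain ⟨T, hT, hTK⟩ := exists_add_smul_notMem hy x hv0 hnonneg
  refine hTK ?_
  simpa [add_comm] using hK.smul_vadd_mem_of_isClosed_of_mem_asymptoticCone hcl hT.le hv hx

lemma add_smul_mem_interior_of_mem_asymptoticCone (hK : Convex ℝ K) (hcl : IsClosed K)
    (hv : v ∈ asymptoticCone ℝ K) {z : E} (hz : z ∈ interior K) {t : ℝ} (ht : 0 ≤ t) :
    z + t • v ∈ interior K :=
  add_smul_mem_interior_of_lt hK hz ht (lt_add_one t) <| by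
    simpa [add_comm] using hK.smul_vadd_mem_of_isClosed_of_mem_asymptoticCone hcl
      (by positivity : 0 ≤ t + 1) hv (interior_subset hz)

lemma exists_mem_interior_inner_lt (hK : Convex ℝ K) (hcl : IsClosed K)
    (hv : v ∈ asymptoticCone ℝ K) {y₀ z : E} (hvy : ⟪v, y₀⟫ < 0) (hz : z ∈ interior K) {u : E}
    (hvu : ⟪v, u⟫ = 0) (m : ℝ) : ∃ z' ∈ interior K, ⟪z', u⟫ = ⟪z, u⟫ ∧ ⟪z', y₀⟫ < m := by
  obtain ⟨t, ht0, ht⟩ := ((Filter.eventually_ge_atTop (0 : ℝ)).and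
    ((Filter.tendsto_id.atTop_mul_const_of_neg hvy).eventually_lt_atBot (m - ⟪z, y₀⟫))).exists
  refine ⟨z + t • v, add_smul_mem_interior_of_mem_asymptoticCone hK hcl hv hz ht0, ?_, ?_⟩
  · rw [inner_add_left, real_inner_smul_left, hvu, mul_zero, add_zero]
  · rw [inner_add_left, real_inner_smul_left]
    exact lt_sub_iff_add_lt'.1 ht

lemma exists_mem_asymptoticCone_orthogonal [FiniteDimensional ℝ E] (hK : Convex ℝ K)
    (hcl : IsClosed K) (hne : K.Nonempty) {y₀ u : E} (hy₀ : y₀ ∈ strictBarrierCone K)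
    (hu : u ∉ strictBarrierCone K) (hu' : -u ∉ strictBarrierCone K) :
    ∃ w ∈ asymptoticCone ℝ K, ⟪w, u⟫ = 0 ∧ ⟪w, y₀⟫ < 0 := by
  obtain ⟨v, hv0, hv, hvu⟩ := exists_mem_asymptoticCone_of_notMem hu
  obtain ⟨v', hv0', hv', hvu'⟩ := exists_mem_asymptoticCone_of_notMem hu'
  have hneg := inner_neg_of_mem_asymptoticCone hK hcl hne hv hv0 hy₀
  have hneg' := inner_neg_of_mem_asymptoticCone hK hcl hne hv' hv0' hy₀
  have hhalf : Convex ℝ {w : E | ⟪w, y₀⟫ < 0} :=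
    convex_halfSpace_lt (f := fun w => ⟪w, y₀⟫)
      ⟨fun _ _ => inner_add_left .., fun _ _ => real_inner_smul_left ..⟩ 0
  rw [inner_neg_right, neg_nonneg] at hvu'
  obtain ⟨w, hw, hwu⟩ := (convex_segment v v').isPreconnected.intermediate_value
    (f := fun w => ⟪w, u⟫) (right_mem_segment ℝ v v') (left_mem_segment ℝ v v') (by fun_prop)
    ⟨hvu', hvu⟩
  exact ⟨w, hK.asymptoticCone.segment_subset hv hv' hw, hwu, hhalf.segment_subset hneg hneg' hw⟩

end AsymptoticDirections

section GlobalFit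

open Filter Topology

variable {E : Type*} [NormedAddCommGroup E] [InnerProductSpace ℝ E] {K : Set E} {D : E → ℝ}
  {y₀ p : E}

lemma exists_ne_zero_inner_eq_zero_pair [FiniteDimensional ℝ E] (hdim : 3 ≤ Module.finrank ℝ E)
    (u y : E) : ∃ d ≠ 0, ⟪d, u⟫ = 0 ∧ ⟪d, y⟫ = 0 := by
  have hspan : Module.finrank ℝ (Submodule.span ℝ (Set.range ![u, y])) ≤ 2 :=
    finrank_range_le_card ![u, y]
  have hsum := (Submodule.span ℝ (Set.range ![u, y])).finrank_add_finrank_orthogonal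
  obtain ⟨d, hd, hd0⟩ := Submodule.exists_mem_ne_zero_of_ne_bot
    (Submodule.one_le_finrank_iff.1 (by omega : 1 ≤ Module.finrank ℝ
      (Submodule.span ℝ (Set.range ![u, y]))ᗮ))
  have horth := (Submodule.mem_orthogonal' _ d).1 hd
  exact ⟨d, hd0, horth u (Submodule.subset_span ⟨0, rfl⟩),
    horth y (Submodule.subset_span ⟨1, rfl⟩)⟩

lemma IsQuadratic.eq_zero_of_eq_zero_on_low_frontier [FiniteDimensional ℝ E]
    (hdim : 3 ≤ Module.finrank ℝ E) {g : E → ℝ} (hg : IsQuadratic g) (hcl : IsClosed K)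
    (hy₀ : y₀ ∈ strictBarrierCone K) {z u : E} {m : ℝ} (hz : z ∈ interior K)
    (hzm : ⟪z, y₀⟫ < m) (hgz : g z = 0)
    (hgf : ∀ x ∈ frontier K, ⟪x, u⟫ = ⟪z, u⟫ → ⟪x, y₀⟫ < m → g x = 0) {x : E}
    (hx : ⟪x, u⟫ = ⟪z, u⟫) : g x = 0 := by
  obtain ⟨d, hd, hdu, hdy⟩ := exists_ne_zero_inner_eq_zero_pair hdim u y₀
  obtain ⟨r, hr0, hrm⟩ := exists_between (sub_pos.2 hzm)
  have hscaled : HasBoundedSlices K (r⁻¹ • y₀) :=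
    hasBoundedSlices_of_mem (smul_mem_strictBarrierCone hy₀ (inv_pos.2 hr0))
  suffices g (z + (x - z)) = 0 by rwa [add_sub_cancel] at this
  refine hg.eq_zero_of_eq_zero_on_frontier_slab hcl hscaled hz
    (by rw [inner_smul_right, hdy, mul_zero]) hd (x - z) hgz fun a b hf hslab => hgf _ hf ?_ ?_
  · simp only [inner_add_left, real_inner_smul_left, inner_sub_left, hdu, hx, sub_self, mul_zero,
      add_zero]
  · rw [inner_smul_right] at hslab
    have hle := (inv_mul_le_iff₀ hr0).1 (le_of_abs_le hslab)
    rw [inner_add_left]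
    linarith

lemma IsQuadratic.ne_zero_of_eq_zero_on_low_frontier [FiniteDimensional ℝ E]
    (hdim : 3 ≤ Module.finrank ℝ E) {Q : E → ℝ} (hQ : IsQuadratic Q) (hQ0 : Q ≠ 0)
    (hcl : IsClosed K) (hy₀ : y₀ ∈ strictBarrierCone K) {m : ℝ}
    (hQf : ∀ x ∈ frontier K, ⟪x, y₀⟫ < m → Q x = 0) {z : E} (hz : z ∈ interior K)
    (hzm : ⟪z, y₀⟫ < m) : Q z ≠ 0 := fun hQz => hQ0 <| funext fun x =>
  hQ.eq_zero_of_eq_zero_on_low_frontier hdim hcl hy₀ (u := 0) hz hzm hQz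
    (fun x hx _ => hQf x hx) (by simp only [inner_zero_right])

namespace IsTransversalHeight

lemma interior_nonempty [Nontrivial E] (hD : IsTransversalHeight K D) :
    (interior K).Nonempty := by
  obtain ⟨y, hy⟩ := exists_ne (0 : E)
  obtain ⟨z, hz, -⟩ := hD.exists_mem_interior y hy
  exact ⟨z, hz⟩

lemma exists_inward_normal_ne_zero [CompleteSpace E] [Nontrivial E] (hD : IsTransversalHeight K D)
    (hK : Convex ℝ K) (hp : p ∈ frontier K) :
    ∃ N ≠ 0, ∀ x ∈ interior K, ⟪p, N⟫ < ⟪x, N⟫ := by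
  obtain ⟨N, hN⟩ := exists_inward_normal hK hp
  obtain ⟨z, hz⟩ := hD.interior_nonempty
  refine ⟨N, ?_, hN⟩
  rintro rfl
  simpa using hN z hz

-- `⟪x, -y⟫ = D (-y)` and `⟪x, y⟫ = -D (-y)` describe the same hyperplane.
lemma reflect (hD : IsTransversalHeight K D) : IsTransversalHeight K fun y => -D (-y) where
  continuousAt y hy :=
    ((hD.continuousAt (-y) (neg_ne_zero.2 hy)).comp continuousAt_neg).neg
  map_smul y t ht := by rw [← smul_neg, hD.map_smul _ t ht, mul_neg]
  exists_mem_interior y hy := by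
    obtain ⟨z, hz, hzy⟩ := hD.exists_mem_interior (-y) (neg_ne_zero.2 hy)
    exact ⟨z, hz, by rw [← hzy, inner_neg_right, neg_neg]⟩

-- Move the normal from an outer normal at `p`, whose hyperplane passes strictly below `p`, to `y₀`.
lemma exists_mem_strictBarrierCone_inner_eq [CompleteSpace E] (hD : IsTransversalHeight K D)
    (hK : Convex ℝ K) (hcl : IsClosed K) (h0 : 0 ∉ strictBarrierCone K)
    (hy₀ : y₀ ∈ strictBarrierCone K) (hp : p ∈ frontier K) (hlow : ⟪p, y₀⟫ < D y₀) :
    ∃ y ∈ strictBarrierCone K, ⟪p, y⟫ = D y := by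
  have : Nontrivial E := ⟨y₀, 0, fun h => h0 (h ▸ hy₀)⟩
  obtain ⟨N, hN0, hN⟩ := hD.exists_inward_normal_ne_zero hK hp
  let Y (s : ℝ) : E := s • y₀ + -((1 - s) • N)
  have hY (s : ℝ) (hs : s ∈ Ioc (0 : ℝ) 1) : Y s ∈ strictBarrierCone K :=
    add_mem_strictBarrierCone (smul_mem_strictBarrierCone hy₀ hs.1)
      (C' := -((1 - s) * ⟪p, N⟫)) fun x hx => by
        rw [inner_neg_right, inner_smul_right, neg_le_neg_iff]
        exact mul_le_mul_of_nonneg_left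
          (inner_le_of_inward_normal hK hcl hD.interior_nonempty hN hx) (sub_nonneg.2 hs.2)
  have hYne (s : ℝ) (hs : s ∈ Icc (0 : ℝ) 1) : Y s ≠ 0 := by
    rcases hs.1.eq_or_lt with rfl | hpos
    · simpa [Y] using hN0
    · exact fun h => h0 (h ▸ hY s ⟨hpos, hs.2⟩)
  have hcont : ContinuousOn (fun s => D (Y s) - ⟪p, Y s⟫) (Icc 0 1) := fun s hs =>
    have hYs : ContinuousAt Y s := by fun_prop
    (((hD.continuousAt _ (hYne s hs)).comp hYs).sub
      (continuousAt_const.inner (𝕜 := ℝ) hYs)).continuousWithinAt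
  obtain ⟨z, hz, hzN⟩ := hD.exists_mem_interior (-N) (neg_ne_zero.2 hN0)
  have hstart : D (Y 0) - ⟪p, Y 0⟫ < 0 := by
    simpa [Y, ← hzN, inner_neg_right] using hN z hz
  have hend : 0 ≤ D (Y 1) - ⟪p, Y 1⟫ := by simpa [Y] using hlow.le
  obtain ⟨s, hs, hzero⟩ := intermediate_value_Ioc zero_le_one hcont ⟨hstart, hend⟩
  exact ⟨Y s, hY s hs, (sub_eq_zero.1 hzero).symm⟩

lemma exists_strictBarrierCone_subset_fittingNormals [FiniteDimensional ℝ E]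
    (hD : IsTransversalHeight K D) (hdim : 3 ≤ Module.finrank ℝ E) (hK : Convex ℝ K)
    (hcl : IsClosed K) (hq : ∀ y ≠ 0, ∃ q, IsSectionQuadratic K D y q)
    (h0 : 0 ∉ strictBarrierCone K) (hy₀ : y₀ ∈ strictBarrierCone K) :
    ∃ Q, IsQuadratic Q ∧ Q ≠ 0 ∧ strictBarrierCone K ⊆ fittingNormals K D Q ∧
      ∀ p ∈ frontier K, ⟪p, y₀⟫ < D y₀ → Q p = 0 := by
  obtain ⟨Q, hQ, hQ0, hfit⟩ := hD.exists_subset_fittingNormals hdim hK hcl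
    (isOpen_strictBarrierCone K) h0 ((convex_strictBarrierCone K).isConnected ⟨y₀, hy₀⟩)
    fun y hy => ⟨hasBoundedSlices_of_mem hy, hq y fun h => h0 (h ▸ hy)⟩
  refine ⟨Q, hQ, hQ0, hfit, fun p hp hlow => ?_⟩
  obtain ⟨y, hy, hpy⟩ := hD.exists_mem_strictBarrierCone_inner_eq hK hcl h0 hy₀ hp hlow
  exact hfit hy p hp hpy

lemma exists_reflected_fit [FiniteDimensional ℝ E]
    (hD : IsTransversalHeight K D) (hdim : 3 ≤ Module.finrank ℝ E) (hK : Convex ℝ K)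
    (hcl : IsClosed K) (hq : ∀ y ≠ 0, ∃ q, IsSectionQuadratic K D y q)
    (h0 : 0 ∉ strictBarrierCone K) (hy₀ : y₀ ∈ strictBarrierCone K) :
    ∃ Q, IsQuadratic Q ∧ Q ≠ 0 ∧ -strictBarrierCone K ⊆ fittingNormals K D Q ∧
      ∀ p ∈ frontier K, ⟪p, y₀⟫ < -D (-y₀) → Q p = 0 := by
  have hiff (x y : E) : ⟪x, y⟫ = -D (-y) ↔ ⟪x, -y⟫ = D (-y) := by
    rw [inner_neg_right, neg_eq_iff_eq_neg]
  have hq' (y : E) (hy : y ≠ 0) : ∃ q, IsSectionQuadratic K (fun y => -D (-y)) y q := by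
    obtain ⟨q, hq⟩ := hq (-y) (neg_ne_zero.2 hy)
    exact ⟨q, hq.isQuadratic, fun x hx hxy => hq.eq_zero x hx ((hiff x y).1 hxy),
      fun x hx hxy => hq.pos x hx ((hiff x y).1 hxy)⟩
  obtain ⟨Q, hQ, hQ0, hfit, hlow⟩ :=
    hD.reflect.exists_strictBarrierCone_subset_fittingNormals hdim hK hcl hq' h0 hy₀
  refine ⟨Q, hQ, hQ0, fun y hy x hx hxy => hfit hy x hx ?_, hlow⟩
  rwa [hiff, neg_neg]

lemma exists_fit_on_barrierCones [FiniteDimensional ℝ E]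
    (hD : IsTransversalHeight K D) (hdim : 3 ≤ Module.finrank ℝ E) (hK : Convex ℝ K)
    (hcl : IsClosed K) (hq : ∀ y ≠ 0, ∃ q, IsSectionQuadratic K D y q)
    (h0 : 0 ∉ strictBarrierCone K) (hy₀ : y₀ ∈ strictBarrierCone K) :
    ∃ Q, IsQuadratic Q ∧ Q ≠ 0 ∧ strictBarrierCone K ⊆ fittingNormals K D Q ∧
      -strictBarrierCone K ⊆ fittingNormals K D Q ∧
      ∃ m, ∀ p ∈ frontier K, ⟪p, y₀⟫ < m → Q p = 0 := by
  obtain ⟨Q, hQ, hQ0, hfit, hlow⟩ :=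
    hD.exists_strictBarrierCone_subset_fittingNormals hdim hK hcl hq h0 hy₀
  obtain ⟨Q', hQ', hQ0', hfit', hlow'⟩ := hD.exists_reflected_fit hdim hK hcl hq h0 hy₀
  obtain ⟨z₀, hz₀, -⟩ := hD.exists_mem_interior y₀ fun h => h0 (h ▸ hy₀)
  obtain ⟨v, hv0, hv, -⟩ := exists_mem_asymptoticCone_of_notMem h0
  have hvy := inner_neg_of_mem_asymptoticCone hK hcl ⟨z₀, interior_subset hz₀⟩ hv hv0 hy₀
  obtain ⟨z, hz, -, hzm⟩ := exists_mem_interior_inner_lt hK hcl hv hvy hz₀ (inner_zero_right v)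
    (min (D y₀) (-D (-y₀)))
  have hQz : Q z ≠ 0 := hQ.ne_zero_of_eq_zero_on_low_frontier hdim hQ0 hcl hy₀ hlow hz
    (hzm.trans_le (min_le_left _ _))
  have heq : Q' = fun x => Q' z / Q z * Q x := funext fun x => sub_eq_zero.1 <|
    (hQ'.sub (hQ.const_mul _)).eq_zero_of_eq_zero_on_low_frontier hdim hcl hy₀ (u := 0) hz hzm
      (by field_simp; ring)
      (fun x hx _ hxm => by
        rw [hlow x hx (hxm.trans_le (min_le_left _ _)),
          hlow' x hx (hxm.trans_le (min_le_right _ _)), mul_zero, sub_zero])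
      (by simp only [inner_zero_right])
  have hratio : Q' z / Q z ≠ 0 := fun h => hQ0' <| by
    rw [heq, h]
    exact funext fun x => zero_mul _
  rw [heq, fittingNormals_const_mul hratio] at hfit'
  exact ⟨Q, hQ, hQ0, hfit, hfit', _, hlow⟩

lemma mem_fittingNormals_of_eq_zero_on_low_frontier [FiniteDimensional ℝ E]
    (hD : IsTransversalHeight K D) (hdim : 3 ≤ Module.finrank ℝ E) (hK : Convex ℝ K)
    (hcl : IsClosed K) (hy₀ : y₀ ∈ strictBarrierCone K) {Q q : E → ℝ} (hQ : IsQuadratic Q)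
    (hQ0 : Q ≠ 0) {m : ℝ} (hlow : ∀ p ∈ frontier K, ⟪p, y₀⟫ < m → Q p = 0) {u w : E}
    (hu : u ≠ 0) (hq : IsSectionQuadratic K D u q) (hw : w ∈ asymptoticCone ℝ K)
    (hwu : ⟪w, u⟫ = 0) (hwy : ⟪w, y₀⟫ < 0) : u ∈ fittingNormals K D Q := by
  obtain ⟨z₀, hz₀, hz₀u⟩ := hD.exists_mem_interior u hu
  obtain ⟨z, hz, hzu, hzm⟩ := exists_mem_interior_inner_lt hK hcl hw hwy hz₀ hwu m
  rw [hz₀u] at hzu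
  have hQz : Q z ≠ 0 := hQ.ne_zero_of_eq_zero_on_low_frontier hdim hQ0 hcl hy₀ hlow hz hzm
  have hqz : q z ≠ 0 := (hq.pos z hz hzu).ne'
  intro x hx hxu
  have hdiff : q x - q z / Q z * Q x = 0 :=
    (hq.isQuadratic.sub (hQ.const_mul _)).eq_zero_of_eq_zero_on_low_frontier hdim hcl hy₀ hz hzm
      (by field_simp; ring)
      (fun x hx hxu hxm => by
        rw [hq.eq_zero x hx (hxu.trans hzu), hlow x hx hxm, mul_zero, sub_zero])
      (hxu.trans hzu.symm)
  rw [hq.eq_zero x hx hxu, zero_sub, neg_eq_zero] at hdiff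
  exact (mul_eq_zero.1 hdiff).resolve_left (div_ne_zero hqz hQz)

lemma exists_fit_of_zero_mem [FiniteDimensional ℝ E] (hD : IsTransversalHeight K D)
    (hdim : 3 ≤ Module.finrank ℝ E) (hK : Convex ℝ K) (hcl : IsClosed K)
    (hq : ∀ y ≠ 0, ∃ q, IsSectionQuadratic K D y q) (h0 : 0 ∈ strictBarrierCone K) :
    ∃ Q, IsQuadratic Q ∧ Q ≠ 0 ∧ {0}ᶜ ⊆ fittingNormals K D Q := by
  have hall (y : E) : y ∈ strictBarrierCone K := by
    have hnear : ∀ᶠ t : ℝ in 𝓝 0, t • y ∈ strictBarrierCone K :=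
      (by fun_prop : ContinuousAt (fun t : ℝ => t • y) 0).eventually_mem
        ((isOpen_strictBarrierCone K).mem_nhds (by rwa [zero_smul]))
    obtain ⟨t, hty, ht⟩ := ((hnear.filter_mono nhdsWithin_le_nhds).and
      (self_mem_nhdsWithin (s := Ioi (0 : ℝ)))).exists
    simpa [smul_smul, ht.ne'] using smul_mem_strictBarrierCone hty (inv_pos.2 ht)
  exact hD.exists_subset_fittingNormals hdim hK hcl isOpen_compl_singleton (by simp)
    (isConnected_compl_singleton_of_one_lt_rank (Module.lt_rank_of_lt_finrank (by omega)) 0)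
    fun y hy => ⟨hasBoundedSlices_of_mem (hall y), hq y hy⟩

lemma exists_fit [FiniteDimensional ℝ E] (hD : IsTransversalHeight K D)
    (hdim : 3 ≤ Module.finrank ℝ E) (hK : Convex ℝ K) (hcl : IsClosed K)
    (hq : ∀ y ≠ 0, ∃ q, IsSectionQuadratic K D y q) (hy₀ : y₀ ∈ strictBarrierCone K) :
    ∃ Q, IsQuadratic Q ∧ Q ≠ 0 ∧ {0}ᶜ ⊆ fittingNormals K D Q := by
  by_cases h0 : 0 ∈ strictBarrierCone K
  · exact hD.exists_fit_of_zero_mem hdim hK hcl hq h0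
  obtain ⟨Q, hQ, hQ0, hfit, hfit', m, hlow⟩ :=
    hD.exists_fit_on_barrierCones hdim hK hcl hq h0 hy₀
  refine ⟨Q, hQ, hQ0, fun u hu => ?_⟩
  by_cases hu₁ : u ∈ strictBarrierCone K
  · exact hfit hu₁
  by_cases hu₂ : -u ∈ strictBarrierCone K
  · exact hfit' hu₂
  have : Nontrivial E := ⟨u, 0, hu⟩
  obtain ⟨w, hw, hwu, hwy⟩ := exists_mem_asymptoticCone_orthogonal hK hcl
    (hD.interior_nonempty.mono interior_subset) hy₀ hu₁ hu₂
  obtain ⟨q, hq⟩ := hq u hu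
  exact hD.mem_fittingNormals_of_eq_zero_on_low_frontier hdim hK hcl hy₀ hQ hQ0 hlow hu hq hw hwu
    hwy

lemma exists_ne_zero_inner_eq [FiniteDimensional ℝ E] (hD : IsTransversalHeight K D)
    (hdim : 2 ≤ Module.finrank ℝ E) (hK : Convex ℝ K) (hp : p ∈ frontier K) :
    ∃ y ≠ 0, ⟪p, y⟫ = D y := by
  have : Nontrivial E := Module.nontrivial_of_finrank_pos (R := ℝ) (by omega)
  obtain ⟨N, hN0, hN⟩ := hD.exists_inward_normal_ne_zero hK hp
  have hcont : ContinuousOn (fun y => ⟪p, y⟫ - D y) ({0}ᶜ : Set E) := fun y hy =>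
    ((by fun_prop : ContinuousAt (fun y => ⟪p, y⟫) y).sub
      (hD.continuousAt y hy)).continuousWithinAt
  obtain ⟨x, hx, hxN⟩ := hD.exists_mem_interior N hN0
  obtain ⟨x', hx', hxN'⟩ := hD.exists_mem_interior (-N) (neg_ne_zero.2 hN0)
  have hle : ⟪p, N⟫ - D N ≤ 0 := by linarith [hN x hx]
  have hge : 0 ≤ ⟪p, -N⟫ - D (-N) := by
    rw [← hxN', inner_neg_right, inner_neg_right]
    linarith [hN x' hx']
  obtain ⟨y, hy, hy0⟩ := (isConnected_compl_singleton_of_one_lt_rank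
    (Module.lt_rank_of_lt_finrank (by omega)) (0 : E)).isPreconnected.intermediate_value
    hN0 (neg_ne_zero.2 hN0) hcont ⟨hle, hge⟩
  exact ⟨y, hy, sub_eq_zero.1 hy0⟩

theorem exists_quadratic_eq_zero_on_frontier [FiniteDimensional ℝ E] (hD : IsTransversalHeight K D)
    (hdim : 3 ≤ Module.finrank ℝ E) (hK : Convex ℝ K) (hcl : IsClosed K)
    (hq : ∀ y ≠ 0, ∃ q, IsSectionQuadratic K D y q) (hy₀ : y₀ ∈ strictBarrierCone K) :
    ∃ Q, IsQuadratic Q ∧ (∀ x ∈ frontier K, Q x = 0) ∧ ∀ x ∈ interior K, Q x ≠ 0 := by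
  obtain ⟨Q, hQ, hQ0, hfit⟩ := hD.exists_fit hdim hK hcl hq hy₀
  have hzero (p : E) (hp : p ∈ frontier K) : Q p = 0 := by
    obtain ⟨y, hy, hpy⟩ := hD.exists_ne_zero_inner_eq (by omega) hK hp
    exact hfit hy p hp hpy
  exact ⟨Q, hQ, hzero, fun z hz => hQ.ne_zero_of_eq_zero_on_low_frontier hdim hQ0 hcl hy₀
    (fun x hx _ => hzero x hx) hz (lt_add_one _)⟩

end IsTransversalHeight

end GlobalFit

section QuadraticCells

variable {E F : Type*} [NormedAddCommGroup E] [NormedSpace ℝ E] [NormedAddCommGroup F]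
  [NormedSpace ℝ F]

/-- A proper nonempty open convex set `U` that is a connected component of the complement of the
zero set of a quadratic function `q`, with the component condition expressed through the values of
`q` on `U` and on its frontier. -/
structure IsQuadraticCell (q : E → ℝ) (U : Set E) : Prop where
  isQuadratic : IsQuadratic q
  isOpen : IsOpen U
  convex : Convex ℝ U
  nonempty : U.Nonempty
  ne_univ : U ≠ univ
  ne_zero : ∀ x ∈ U, q x ≠ 0
  eq_zero : ∀ x ∈ frontier U, q x = 0

lemma IsQuadraticCell.frontier_nonempty {q : E → ℝ} {U : Set E} (hU : IsQuadraticCell q U) :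
    (frontier U).Nonempty :=
  nonempty_frontier_iff.2 ⟨hU.nonempty, hU.ne_univ⟩

variable [FiniteDimensional ℝ E] [FiniteDimensional ℝ F]

lemma frontier_preimage_affineMap (A : F →ᵃ[ℝ] E) (hA : Function.Surjective A) (U : Set E) :
    frontier (A ⁻¹' U) = A ⁻¹' frontier U := by
  have hlin : Function.Surjective (LinearMap.toContinuousLinearMap A.linear) :=
    A.linear_surjective_iff.2 hA
  have hopen : IsOpenMap A :=
    AffineMap.isOpenMap_linear_iff.1 (LinearMap.toContinuousLinearMap A.linear |>.isOpenMap hlin)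
  exact (hopen.preimage_frontier_eq_frontier_preimage A.continuous_of_finiteDimensional U).symm

lemma IsQuadraticCell.preimage {q : E → ℝ} {U : Set E} (hU : IsQuadraticCell q U)
    (A : F →ᵃ[ℝ] E) (hA : Function.Surjective A) :
    IsQuadraticCell (fun x => q (A x)) (A ⁻¹' U) where
  isQuadratic := hU.isQuadratic.comp_affineMap A
  isOpen := hU.isOpen.preimage A.continuous_of_finiteDimensional
  convex := hU.convex.affine_preimage A
  nonempty := hU.nonempty.preimage hA
  ne_univ h := hU.ne_univ (hA.preimage_injective (h.trans preimage_univ.symm))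
  ne_zero x hx := hU.ne_zero (A x) hx
  eq_zero x hx := hU.eq_zero (A x) ((frontier_preimage_affineMap A hA U).subset hx)

end QuadraticCells

section QuadricSurfaces

variable {n : ℕ}

lemma isQuadratic_matrix (a : Matrix (Fin n) (Fin n) ℝ) (b : Fin n → ℝ) (c : ℝ) :
    IsQuadratic fun x : En n => (∑ i, ∑ k, a i k * x i * x k) + 2 * (∑ i, b i * x i) + c := by
  let coord (i : Fin n) : En n →ₗ[ℝ] ℝ := (EuclideanSpace.proj i).toLinearMap
  refine ⟨∑ i, ∑ k, a i k • (coord i).smulRight (coord k), (2 : ℝ) • ∑ i, b i • coord i, c,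
    fun x => ?_⟩
  simp [coord, LinearMap.sum_apply, mul_assoc]

lemma linearMap_eq_sum_coord {M : Type*} [AddCommGroup M] [Module ℝ M] (l : En n →ₗ[ℝ] M)
    (x : En n) : l x = ∑ i, x i • l (EuclideanSpace.single i 1) := by
  conv_lhs => rw [← (EuclideanSpace.basisFun (Fin n) ℝ).sum_repr x]
  simp

lemma bilin_eq_sum_coord (B : En n →ₗ[ℝ] En n →ₗ[ℝ] ℝ) (x : En n) :
    B x x = ∑ i, ∑ k,
      B (EuclideanSpace.single i 1) (EuclideanSpace.single k 1) * x i * x k := by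
  rw [linearMap_eq_sum_coord B x, LinearMap.sum_apply]
  refine Finset.sum_congr rfl fun i _ => ?_
  rw [LinearMap.smul_apply, linearMap_eq_sum_coord _ x, smul_eq_mul, Finset.mul_sum]
  exact Finset.sum_congr rfl fun k _ => by rw [smul_eq_mul]; ring

lemma IsQuadratic.exists_matrix {q : En n → ℝ} (hq : IsQuadratic q) :
    ∃ (a : Matrix (Fin n) (Fin n) ℝ) (b : Fin n → ℝ) (c : ℝ), a.IsSymm ∧
      ∀ x, q x = (∑ i, ∑ k, a i k * x i * x k) + 2 * (∑ i, b i * x i) + c := by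
  obtain ⟨B, l, c, h⟩ := hq
  let S : En n →ₗ[ℝ] En n →ₗ[ℝ] ℝ := (2 : ℝ)⁻¹ • (B + B.flip)
  have hS (x : En n) : S x x = B x x := by
    simp only [S, LinearMap.smul_apply, LinearMap.add_apply, LinearMap.flip_apply, smul_eq_mul]
    ring
  refine ⟨fun i k => S (EuclideanSpace.single i 1) (EuclideanSpace.single k 1),
    fun i => l (EuclideanSpace.single i 1) / 2, c, Matrix.IsSymm.ext fun i k => ?_, fun x => ?_⟩
  · simp only [S, LinearMap.smul_apply, LinearMap.add_apply, LinearMap.flip_apply, add_comm]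
  · rw [h, ← hS, bilin_eq_sum_coord, linearMap_eq_sum_coord l x, Finset.mul_sum]
    congr 2
    exact Finset.sum_congr rfl fun i _ => by rw [smul_eq_mul]; ring

-- An affine function is not itself admissible, but its square has the same zeros.
lemma isQuadricSurface_affine {b : Fin n → ℝ} (hb : b ≠ 0) (c : ℝ) :
    IsQuadricSurface {x : En n | 2 * (∑ i, b i * x i) + c = 0} := by
  refine ⟨fun i k => 4 * (b i * b k), fun i => 2 * c * b i, c ^ 2,
    Matrix.IsSymm.ext fun i k => by ring, fun h => hb ?_, ?_⟩
  · exact funext fun i => by simpa using congrFun (congrFun h i) i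
  · ext x
    have hquad : ∑ i, ∑ k, 4 * (b i * b k) * x i * x k = 4 * (∑ i, b i * x i) ^ 2 := by
      rw [sq, Finset.sum_mul_sum, Finset.mul_sum]
      refine Finset.sum_congr rfl fun i _ => ?_
      rw [Finset.mul_sum]
      exact Finset.sum_congr rfl fun k _ => by ring
    have hlin : ∑ i, 2 * c * b i * x i = 2 * c * ∑ i, b i * x i := by
      rw [Finset.mul_sum]
      exact Finset.sum_congr rfl fun i _ => by ring
    rw [mem_ofPred_eq, mem_ofPred_eq, hquad, hlin, ← sq_eq_zero_iff]
    ring_nf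

lemma IsQuadratic.isQuadricSurface {q : En n → ℝ} (hq : IsQuadratic q) {x x' : En n}
    (hx : q x = 0) (hx' : q x' ≠ 0) : IsQuadricSurface {x | q x = 0} := by
  obtain ⟨a, b, c, ha, h⟩ := hq.exists_matrix
  rw [funext h] at hx hx' ⊢
  rcases eq_or_ne a 0 with rfl | ha0
  · have hb : b ≠ 0 := by
      rintro rfl
      exact hx' (by simpa using hx)
    simpa using isQuadricSurface_affine hb c
  · exact ⟨a, b, c, ha, ha0, rfl⟩

lemma mem_componentsIn_of_closure_inter_subset {X : Type*} [TopologicalSpace X] {U F : Set X}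
    (hU : IsOpen U) (hpre : IsPreconnected U) (hne : U.Nonempty) (hUF : U ⊆ F)
    (h : closure U ∩ F ⊆ U) : U ∈ componentsIn F := by
  obtain ⟨x, hx⟩ := hne
  refine ⟨x, hUF hx, (hpre.subset_connectedComponentIn hx hUF).antisymm ?_⟩
  exact isPreconnected_connectedComponentIn.subset_of_closure_inter_subset hU
    ⟨x, mem_connectedComponentIn (hUF hx), hx⟩
    fun y hy => h ⟨hy.1, connectedComponentIn_subset F x hy.2⟩

lemma closure_inter_subset_of_mem_componentsIn {X : Type*} [TopologicalSpace X] {U F : Set X}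
    (hU : U ∈ componentsIn F) : closure U ∩ F ⊆ U := by
  obtain ⟨x, hx, rfl⟩ := hU
  rintro y ⟨hy, hyF⟩
  have hpre : IsPreconnected (insert y (connectedComponentIn F x)) :=
    isPreconnected_connectedComponentIn.subset_closure (subset_insert _ _)
      (insert_subset hy subset_closure)
  exact hpre.subset_connectedComponentIn (mem_insert_of_mem _ (mem_connectedComponentIn hx))
    (insert_subset hyF (connectedComponentIn_subset _ _)) (mem_insert _ _)

lemma IsQuadraticCell.isConvexQuadric_frontier {q : En n → ℝ} {U : Set (En n)}
    (hU : IsQuadraticCell q U) : IsConvexQuadric (frontier U) := by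
  obtain ⟨x, hx⟩ := hU.frontier_nonempty
  obtain ⟨x', hx'⟩ := hU.nonempty
  have hsurface := hU.isQuadratic.isQuadricSurface (hU.eq_zero x hx) (hU.ne_zero x' hx')
  refine ⟨{x | q x = 0}, U, ⟨hsurface, x, hU.eq_zero x hx⟩, ?_, hU.convex, rfl⟩
  refine mem_componentsIn_of_closure_inter_subset hU.isOpen hU.convex.isPreconnected hU.nonempty
    hU.ne_zero fun p ⟨hpU, hp⟩ => ?_
  by_contra hpn
  exact hp (hU.eq_zero p (hU.isOpen.frontier_eq ▸ ⟨hpU, hpn⟩))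

lemma IsConvexQuadric.exists_isQuadraticCell {S : Set (En n)} (hS : IsConvexQuadric S) :
    ∃ q U, IsQuadraticCell q U ∧ S = frontier U := by
  obtain ⟨Q, U, ⟨⟨a, b, c, -, -, rfl⟩, z, hz⟩, hU, hconv, hSU⟩ := hS
  have hq := isQuadratic_matrix a b c
  have hclosure := closure_inter_subset_of_mem_componentsIn hU
  obtain ⟨x₀, hx₀, hcomp⟩ := hU
  have hsub := hcomp ▸ connectedComponentIn_subset _ x₀
  have hopen : IsOpen U :=
    hcomp ▸ (isClosed_eq hq.continuous continuous_const).isOpen_compl.connectedComponentIn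
  refine ⟨_, U, ⟨hq, hopen, hconv, ⟨x₀, hcomp ▸ mem_connectedComponentIn hx₀⟩, ?_, hsub, ?_⟩, hSU⟩
  · rintro rfl
    exact hsub (mem_univ z) hz
  · rw [hopen.frontier_eq]
    exact fun x hx => not_not.1 fun hx0 => hx.2 (hclosure ⟨hx.1, hx0⟩)

end QuadricSurfaces

section Cylinders

variable {E : Type*} [NormedAddCommGroup E] [InnerProductSpace ℝ E] {K : Set E} {v y : E}

/-- `K` is a union of lines parallel to `v`. -/
def IsCylinder (K : Set E) (v : E) : Prop :=
  ∀ x ∈ K, ∀ t : ℝ, x + t • v ∈ K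

namespace IsCylinder

lemma smul (hK : IsCylinder K v) (a : ℝ) : IsCylinder K (a • v) := fun x hx t => by
  rw [smul_smul]
  exact hK x hx (t * a)

lemma add_smul_mem_iff (hK : IsCylinder K v) {x : E} (t : ℝ) : x + t • v ∈ K ↔ x ∈ K :=
  ⟨fun hx => by simpa using hK _ hx (-t), fun hx => hK x hx t⟩

lemma frontier (hK : IsCylinder K v) : IsCylinder (frontier K) v := fun x hx t => by
  have hpreimage : Homeomorph.addRight (t • v) ⁻¹' K = K :=
    Set.ext fun _ => hK.add_smul_mem_iff t
  have hfrontier := (Homeomorph.addRight (t • v)).preimage_frontier K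
  rw [hpreimage] at hfrontier
  exact hfrontier.ge hx

lemma hyperplaneProj_mem_iff (hK : IsCylinder K v) (y : E) (c : ℝ) {x : E} :
    hyperplaneProj y c v x ∈ K ↔ x ∈ K := by
  rw [hyperplaneProj_apply, sub_eq_add_neg, ← neg_smul]
  exact hK.add_smul_mem_iff _

lemma exists_mem_inner_eq (hK : IsCylinder K v) (hv : ⟪v, y⟫ = 1) (hne : K.Nonempty) (c : ℝ) :
    ∃ x ∈ K, ⟪x, y⟫ = c := by
  obtain ⟨x, hx⟩ := hne
  exact ⟨_, (hK.hyperplaneProj_mem_iff y c).2 hx, inner_hyperplaneProj_of_inner_eq_one hv c x⟩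

lemma eq_univ (hK : IsCylinder K v) (hv : ⟪v, y⟫ = 1) {c : ℝ} (h : {x | ⟪x, y⟫ = c} ⊆ K) :
    K = univ :=
  eq_univ_of_forall fun x =>
    (hK.hyperplaneProj_mem_iff y c).1 (h (inner_hyperplaneProj_of_inner_eq_one hv c x))

end IsCylinder

lemma exists_line_point_notMem (hy : y ∈ strictBarrierCone K) (p : E) {d : E} (hd : d ≠ 0) :
    ∃ t : ℝ, p + t • d ∉ K := by
  rcases le_total 0 ⟪d, y⟫ with hdy | hdy
  · obtain ⟨t, -, ht⟩ := exists_add_smul_notMem hy p hd hdy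
    exact ⟨t, ht⟩
  · obtain ⟨t, -, ht⟩ := exists_add_smul_notMem hy p (neg_ne_zero.2 hd)
      (by rwa [inner_neg_left, neg_nonneg])
    exact ⟨-t, by rwa [neg_smul, ← smul_neg]⟩

/-- The functionals bounded above on `K`, identified with vectors through the inner product. -/
def barrierCone (K : Set E) : Set E :=
  {y | ∃ C : ℝ, ∀ x ∈ K, ⟪x, y⟫ ≤ C}

lemma inner_nonpos_of_mem_barrierCone (hK : Convex ℝ K) (hcl : IsClosed K) (hne : K.Nonempty)
    (hv : v ∈ asymptoticCone ℝ K) (hy : y ∈ barrierCone K) : ⟪v, y⟫ ≤ 0 := by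
  obtain ⟨C, hC⟩ := hy
  obtain ⟨x, hx⟩ := hne
  by_contra! hpos
  obtain ⟨t, ht0, ht⟩ := ((Filter.eventually_ge_atTop (0 : ℝ)).and
    ((Filter.tendsto_id.atTop_mul_const hpos).eventually_gt_atTop (C - ⟪x, y⟫))).exists
  have hle := hC _ (hK.smul_vadd_mem_of_isClosed_of_mem_asymptoticCone hcl ht0 hv hx)
  rw [vadd_eq_add, inner_add_left, real_inner_smul_left] at hle
  rw [id_eq] at ht
  linarith

variable [FiniteDimensional ℝ E]

lemma strictBarrierCone_nonempty_of_span_eq_top (hK : Convex ℝ K) (hcl : IsClosed K)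
    (hne : K.Nonempty) (hspan : Submodule.span ℝ (barrierCone K) = ⊤) :
    (strictBarrierCone K).Nonempty := by
  let b := Module.Basis.ofSpan hspan.ge
  have hb (i) : b i ∈ barrierCone K := Module.Basis.ofSpan_subset hspan.ge (mem_range_self i)
  have : Fintype _ := FiniteDimensional.fintypeBasisIndex b
  refine ⟨∑ i, b i, not_not.1 fun hsum => ?_⟩
  obtain ⟨v, hv0, hv, hvsum⟩ := exists_mem_asymptoticCone_of_notMem hsum
  have hnonpos (i) : ⟪v, b i⟫ ≤ 0 := inner_nonpos_of_mem_barrierCone hK hcl hne hv (hb i)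
  have hzero : ∑ i, ⟪v, b i⟫ = 0 :=
    le_antisymm (Finset.sum_nonpos fun i _ => hnonpos i) (by rwa [← inner_sum])
  refine hv0 (InnerProductSpace.ext_inner_right_basis b fun i => ?_)
  rw [inner_zero_left]
  exact (Finset.sum_eq_zero_iff_of_nonpos fun i _ => hnonpos i).1 hzero i (Finset.mem_univ i)

lemma isCylinder_of_mem_orthogonal_barrierCone (hK : Convex ℝ K) (hcl : IsClosed K)
    (hv : v ∈ (Submodule.span ℝ (barrierCone K))ᗮ) : IsCylinder K v := fun x hx t => by
  by_contra hxt
  obtain ⟨f, r, hfK, hfr⟩ := geometric_hahn_banach_closed_point hK hcl hxt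
  obtain ⟨y, rfl⟩ := (InnerProductSpace.toDual ℝ E).surjective f
  simp only [InnerProductSpace.toDual_apply_apply] at hfK hfr
  have hy : y ∈ barrierCone K := ⟨r, fun x hx => real_inner_comm y x ▸ (hfK x hx).le⟩
  have hyv : ⟪y, v⟫ = 0 := (Submodule.mem_orthogonal _ v).1 hv y (Submodule.subset_span hy)
  rw [inner_add_right, inner_smul_right, hyv, mul_zero, add_zero] at hfr
  exact lt_asymm hfr (hfK x hx)

lemma strictBarrierCone_nonempty_or_isCylinder (hK : Convex ℝ K) (hcl : IsClosed K)
    (hne : K.Nonempty) : (strictBarrierCone K).Nonempty ∨ ∃ v ≠ 0, IsCylinder K v := by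
  by_cases hspan : Submodule.span ℝ (barrierCone K) = ⊤
  · exact .inl (strictBarrierCone_nonempty_of_span_eq_top hK hcl hne hspan)
  · obtain ⟨v, hv, hv0⟩ := Submodule.exists_mem_ne_zero_of_ne_bot
      (mt Submodule.orthogonal_eq_bot_iff.1 hspan)
    exact .inr ⟨v, hv0, isCylinder_of_mem_orthogonal_barrierCone hK hcl hv⟩

end Cylinders

section ConvexFrontier

open Filter Topology

variable {E : Type*} [NormedAddCommGroup E] [NormedSpace ℝ E] {U : Set E}

lemma halfSpace_subset_of_frontier_le {f : E →L[ℝ] ℝ} {s : ℝ} (hU : IsOpen U) (hne : U.Nonempty)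
    (hfU : ∀ x ∈ U, f x < s) (hf : ∀ x ∈ frontier U, s ≤ f x) : {x | f x < s} ⊆ U := by
  obtain ⟨x₀, hx₀⟩ := hne
  have hpre := (convex_halfSpace_lt f.toLinearMap.isLinear s).isPreconnected
  refine hpre.subset_of_closure_inter_subset hU ⟨x₀, hfU x₀ hx₀, hx₀⟩ fun x ⟨hx, hxs⟩ => ?_
  by_contra hxU
  exact (hf x (hU.frontier_eq ▸ ⟨hx, hxU⟩)).not_gt hxs

lemma exists_hyperplane_subset_frontier (hU : IsOpen U) (hUc : Convex ℝ U)
    (hfr : Convex ℝ (frontier U)) {p : E} (hp : p ∈ frontier U) :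
    ∃ f : E →L[ℝ] ℝ, {x | f x = f p} ⊆ frontier U := by
  obtain ⟨f, s, hfU, hf⟩ := geometric_hahn_banach_open hUc hU hfr
    (hU.frontier_eq ▸ disjoint_sdiff_right)
  have hclosure : closure U ⊆ {x | f x ≤ s} :=
    closure_minimal (fun x hx => (hfU x hx).le) (isClosed_le f.continuous continuous_const)
  obtain ⟨x₀, hx₀⟩ : U.Nonempty := closure_nonempty_iff.1 ⟨p, hp.1⟩
  have hps : f p = s := le_antisymm (hclosure hp.1) (hf p hp)
  refine ⟨f, fun x hx => ?_⟩
  rw [mem_ofPred_eq, hps] at hx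
  refine hU.frontier_eq ▸ ⟨?_, fun hxU => (hfU x hxU).ne hx⟩
  have hray : Tendsto (fun t : ℝ => x + t • (x₀ - p)) (𝓝[>] 0) (𝓝 x) := by
    have hcont : Continuous fun t : ℝ => x + t • (x₀ - p) := by fun_prop
    simpa using (hcont.tendsto 0).mono_left nhdsWithin_le_nhds
  refine mem_closure_of_tendsto hray (eventually_mem_nhdsWithin.mono fun t ht => ?_)
  refine halfSpace_subset_of_frontier_le hU ⟨x₀, hx₀⟩ hfU hf ?_
  rw [mem_ofPred_eq, map_add, map_smul, map_sub, hx, hps, smul_eq_mul]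
  linarith [mul_neg_of_pos_of_neg ht (sub_neg.2 (hfU x₀ hx₀))]

end ConvexFrontier

section SectionCells

variable {E : Type*} [NormedAddCommGroup E] [InnerProductSpace ℝ E] {K V : Set E} {y e : E}
  {s : ℝ} {g : E → ℝ}

/-- The section of `frontier K` by the hyperplane `⟪x, y⟫ = s` is the section of the frontier of
the quadratic cell `V`. Extending the cell of the hyperplane to a cylinder along the transversal
direction `e` keeps it in the ambient space. -/
structure IsSectionCell (K : Set E) (y : E) (s : ℝ) (e : E) (g : E → ℝ) (V : Set E) : Prop
    extends IsQuadraticCell g V where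
  isCylinder : IsCylinder V e
  mem_frontier_iff : ∀ x, ⟪x, y⟫ = s → (x ∈ frontier K ↔ x ∈ frontier V)

namespace IsSectionCell

lemma frontier_eq (hV : IsSectionCell K y s e g V) (he : ⟪e, y⟫ = 1) (hK : IsCylinder K e) :
    frontier K = frontier V := by
  ext x
  rw [← hK.frontier.hyperplaneProj_mem_iff y s, ← hV.isCylinder.frontier.hyperplaneProj_mem_iff y s]
  exact hV.mem_frontier_iff _ (inner_hyperplaneProj_of_inner_eq_one he s x)

lemma convex_frontier (hV : IsSectionCell K y s e g V) (he : ⟪e, y⟫ = 1) (hK : Convex ℝ K)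
    (hcl : IsClosed K) (hdisj : ∀ x ∈ interior K, ⟪x, y⟫ ≠ s) : Convex ℝ (frontier V) := by
  suffices frontier V = hyperplaneProj y s e ⁻¹' K from this ▸ hK.affine_preimage _
  ext x
  have hx := inner_hyperplaneProj_of_inner_eq_one he s x
  rw [← hV.isCylinder.frontier.hyperplaneProj_mem_iff y s, ← hV.mem_frontier_iff _ hx,
    hcl.frontier_eq]
  exact ⟨fun h => h.1, fun h => ⟨h, fun hint => hdisj _ hint hx⟩⟩

variable [FiniteDimensional ℝ E] {y₀ : E}

-- Otherwise `frontier V` is convex and thus contains a hyperplane, so `K` contains a line.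
lemma exists_mem_interior (hV : IsSectionCell K y s e g V) (hdim : 3 ≤ Module.finrank ℝ E)
    (he : ⟪e, y⟫ = 1) (hK : Convex ℝ K) (hcl : IsClosed K) (hy₀ : y₀ ∈ strictBarrierCone K) :
    ∃ z ∈ interior K, ⟪z, y⟫ = s := by
  by_contra! hdisj
  obtain ⟨p, hp, hpy⟩ := hV.isCylinder.frontier.exists_mem_inner_eq he hV.frontier_nonempty s
  obtain ⟨f, hf⟩ := exists_hyperplane_subset_frontier hV.isOpen hV.convex
    (hV.convex_frontier he hK hcl hdisj) hp
  obtain ⟨w, rfl⟩ := (InnerProductSpace.toDual ℝ E).surjective f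
  obtain ⟨d, hd, hdy, hdw⟩ := exists_ne_zero_inner_eq_zero_pair hdim y w
  obtain ⟨t, ht⟩ := exists_line_point_notMem hy₀ p hd
  have hline : p + t • d ∈ frontier V := hf <| by
    simp [inner_add_right, inner_smul_right, (real_inner_comm d w).trans hdw]
  have hsection : ⟪p + t • d, y⟫ = s := by
    rw [inner_add_left, real_inner_smul_left, hdy, mul_zero, add_zero, hpy]
  exact ht (hcl.frontier_subset ((hV.mem_frontier_iff _ hsection).2 hline))

lemma ne_zero_of_mem_interior (hV : IsSectionCell K y s e g V)
    (hdim : 3 ≤ Module.finrank ℝ E) (he : ⟪e, y⟫ = 1) (hcl : IsClosed K)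
    (hy₀ : y₀ ∈ strictBarrierCone K) {z : E} (hz : z ∈ interior K) (hzs : ⟪z, y⟫ = s) :
    g z ≠ 0 := fun hgz => by
  obtain ⟨x, hx, hxs⟩ := hV.isCylinder.exists_mem_inner_eq he hV.nonempty s
  refine hV.ne_zero x hx (hV.isQuadratic.eq_zero_of_eq_zero_on_low_frontier hdim hcl hy₀ hz
    (lt_add_one _) hgz (fun p hp hpz _ => ?_) (hxs.trans hzs.symm))
  exact hV.eq_zero p ((hV.mem_frontier_iff p (hpz.trans hzs)).1 hp)

lemma exists_isSectionQuadratic {D : E → ℝ} (hV : IsSectionCell K y (D y) e g V)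
    (hdim : 3 ≤ Module.finrank ℝ E) (he : ⟪e, y⟫ = 1) (hK : Convex ℝ K) (hcl : IsClosed K)
    (hy₀ : y₀ ∈ strictBarrierCone K) : ∃ q, IsSectionQuadratic K D y q := by
  have hzero (x : E) (hx : x ∈ frontier K) (hxy : ⟪x, y⟫ = D y) : g x = 0 :=
    hV.eq_zero x ((hV.mem_frontier_iff x hxy).1 hx)
  have hplane : Convex ℝ {x | ⟪x, y⟫ = D y} :=
    convex_hyperplane ((innerₗ E).flip y).isLinear (D y)
  by_cases hpos : ∀ x ∈ interior K, ⟪x, y⟫ = D y → 0 < g x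
  · exact ⟨g, hV.isQuadratic, hzero, hpos⟩
  push Not at hpos
  obtain ⟨w, hw, hwy, hgw⟩ := hpos
  refine ⟨_, hV.isQuadratic.const_mul (-1), fun x hx hxy => by rw [hzero x hx hxy, mul_zero],
    fun x hx hxy => ?_⟩
  by_contra! hgx
  obtain ⟨c, ⟨hc, hcy⟩, hgc⟩ := (hK.interior.inter hplane).isPreconnected.intermediate_value
    ⟨hw, hwy⟩ ⟨hx, hxy⟩ hV.isQuadratic.continuous.continuousOn ⟨hgw, by linarith⟩
  exact hV.ne_zero_of_mem_interior hdim he hcl hy₀ hc hcy hgc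

end IsSectionCell

lemma not_hyperplane_subset [FiniteDimensional ℝ E] {y₀ : E} (hdim : 3 ≤ Module.finrank ℝ E)
    (he : ⟪e, y⟫ = 1) (hy₀ : y₀ ∈ strictBarrierCone K) (s : ℝ) : ¬ {x | ⟪x, y⟫ = s} ⊆ K := by
  intro hsub
  obtain ⟨d, hd, hdy, -⟩ := exists_ne_zero_inner_eq_zero_pair hdim y y
  obtain ⟨t, ht⟩ := exists_line_point_notMem hy₀ (s • e) hd
  exact ht (hsub (by simp [inner_add_left, real_inner_smul_left, he, hdy]))

end SectionCells

section QuadricSections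

lemma exists_affine_leftInverse {E F : Type*} [NormedAddCommGroup E] [NormedSpace ℝ E]
    [NormedAddCommGroup F] [NormedSpace ℝ F] {φ : F →ᵃ[ℝ] E} (hφ : Function.Injective φ) :
    ∃ ρ : E →ᵃ[ℝ] F, Function.LeftInverse ρ φ := by
  obtain ⟨r, hr⟩ := φ.linear.exists_leftInverse_of_injective
    (LinearMap.ker_eq_bot.2 (φ.linear_injective_iff.2 hφ))
  refine ⟨r.toAffineMap - AffineMap.const ℝ E (r (φ 0)), fun z => ?_⟩
  have hz : φ z - φ 0 = φ.linear z := by simpa using (φ.linearMap_vsub z 0).symm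
  simpa [← map_sub, hz] using LinearMap.congr_fun hr z

variable {n : ℕ} {K : Set (En n)} {y e v : En n} {s : ℝ} {δ : sphere (0 : En n) 1 → ℝ}

lemma IsConvexQuadricIn.exists_isSectionCell
    (h : IsConvexQuadricIn {x | ⟪x, y⟫ = s} (frontier K ∩ {x | ⟪x, y⟫ = s})) (he : ⟪e, y⟫ = 1) :
    ∃ g V, IsSectionCell K y s e g V := by
  obtain ⟨-, φ, hφ, hquadric⟩ := h
  obtain ⟨q, U, hU, hS⟩ := hquadric.exists_isQuadraticCell
  obtain ⟨ρ, hρ⟩ := exists_affine_leftInverse (φ := φ.toAffineMap) φ.injective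
  have hφy (z) : ⟪φ z, y⟫ = s := hφ.subset (mem_range_self z)
  let ψ : En n →ᵃ[ℝ] En (n - 1) := ρ.comp (hyperplaneProj y s e)
  have hψφ (z) : ψ (φ z) = z := by
    simpa [ψ, hyperplaneProj_of_mem (hφy z)] using hρ z
  have hψ : Function.Surjective ψ := fun z => ⟨φ z, hψφ z⟩
  have hψe (x : En n) (t : ℝ) : ψ (x + t • e) = ψ x := by
    simp only [ψ, AffineMap.comp_apply, hyperplaneProj_apply, inner_add_left, real_inner_smul_left,
      he]
    congr 1
    module
  refine ⟨_, ψ ⁻¹' U, { hU.preimage ψ hψ with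
    isCylinder := fun x hx t => by rwa [mem_preimage, hψe]
    mem_frontier_iff := fun x hx => ?_ }⟩
  obtain ⟨z, rfl⟩ : x ∈ range φ := hφ.superset hx
  rw [frontier_preimage_affineMap ψ hψ, mem_preimage, hψφ, ← hS]
  exact ⟨fun hz => ⟨hz, hx⟩, fun hz => hz.1⟩

lemma inv_norm_smul_mem_sphere {y : En n} (hy : y ≠ 0) : ‖y‖⁻¹ • y ∈ sphere (0 : En n) 1 :=
  mem_sphere_zero_iff_norm.2 (norm_smul_inv_norm (𝕜 := ℝ) hy)

lemma isConvexQuadric_frontier_of_isCylinder (hv : v ≠ 0) (hcyl : IsCylinder K v)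
    (hKne : K ≠ univ) (hsec : ∀ u : sphere (0 : En n) 1,
      sphHyp δ u ⊆ K ∨ IsConvexQuadricIn (sphHyp δ u) (frontier K ∩ sphHyp δ u)) :
    IsConvexQuadric (frontier K) := by
  let u : sphere (0 : En n) 1 := ⟨‖v‖⁻¹ • v, inv_norm_smul_mem_sphere hv⟩
  have hu : ⟪(u : En n), (u : En n)⟫ = 1 := by simp
  have hcylu : IsCylinder K (u : En n) := hcyl.smul ‖v‖⁻¹
  rcases hsec u with hsub | hquadric
  · exact absurd (hcylu.eq_univ hu hsub) hKne
  · obtain ⟨g, V, hV⟩ := hquadric.exists_isSectionCell hu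
    rw [hV.frontier_eq hu hcylu]
    exact hV.isConvexQuadric_frontier

lemma exists_homogeneous_extension {E : Type*} [NormedAddCommGroup E] [NormedSpace ℝ E]
    {δ : sphere (0 : E) 1 → ℝ} (hδ : Continuous δ) :
    ∃ D : E → ℝ, (∀ y ≠ 0, ContinuousAt D y) ∧ (∀ y, ∀ t > 0, D (t • y) = t * D y) ∧
      ∀ u : sphere (0 : E) 1, D u = δ u := by
  obtain ⟨g, hg⟩ := ContinuousMap.exists_restrict_eq (isClosed_sphere (x := (0 : E)) (ε := 1))
    ⟨δ, hδ⟩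
  refine ⟨fun y => ‖y‖ * g (‖y‖⁻¹ • y), fun y hy => ?_, fun y t ht => ?_, fun u => ?_⟩
  · have hinv : ContinuousAt (fun y : E => ‖y‖⁻¹ • y) y :=
      (continuous_norm.continuousAt.inv₀ (norm_ne_zero_iff.2 hy)).smul continuousAt_id
    exact continuous_norm.continuousAt.mul (g.continuous.continuousAt.comp' hinv)
  · have hnorm : ‖t • y‖ = t * ‖y‖ := norm_smul_of_nonneg ht.le y
    have hdir : ‖t • y‖⁻¹ • t • y = ‖y‖⁻¹ • y := by
      rw [hnorm, smul_smul, mul_inv, mul_right_comm, inv_mul_cancel₀ ht.ne', one_mul]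
    beta_reduce
    rw [hdir, hnorm, mul_assoc]
  · simpa using DFunLike.congr_fun hg u

lemma sphHyp_inv_norm_smul {D : En n → ℝ} (hhom : ∀ y, ∀ t > 0, D (t • y) = t * D y)
    (hD : ∀ u : sphere (0 : En n) 1, D u = δ u) (hy : y ≠ 0) :
    sphHyp δ ⟨‖y‖⁻¹ • y, inv_norm_smul_mem_sphere hy⟩ = {x | ⟪x, y⟫ = D y} := by
  ext x
  rw [sphHyp, mem_ofPred_eq, mem_ofPred_eq, ← hD, hhom y _ (inv_pos.2 (norm_pos_iff.2 hy)),
    inner_smul_right]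
  exact mul_right_inj' (inv_ne_zero (norm_ne_zero_iff.2 hy))

variable {y₀ : En n}

lemma exists_isSectionCell_of_sections (hn : 3 ≤ n) (hy₀ : y₀ ∈ strictBarrierCone K)
    (hsec : ∀ u : sphere (0 : En n) 1,
      sphHyp δ u ⊆ K ∨ IsConvexQuadricIn (sphHyp δ u) (frontier K ∩ sphHyp δ u))
    {D : En n → ℝ} (hhom : ∀ y, ∀ t > 0, D (t • y) = t * D y)
    (hD : ∀ u : sphere (0 : En n) 1, D u = δ u) (hy : y ≠ 0) :
    ∃ e g V, ⟪e, y⟫ = 1 ∧ IsSectionCell K y (D y) e g V := by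
  have he : ⟪⟪y, y⟫⁻¹ • y, y⟫ = 1 := by
    rw [real_inner_smul_left, inv_mul_cancel₀ (inner_self_ne_zero.2 hy)]
  have hsecy := hsec ⟨_, inv_norm_smul_mem_sphere hy⟩
  rw [sphHyp_inv_norm_smul hhom hD hy] at hsecy
  obtain ⟨g, V, hV⟩ := (hsecy.resolve_left
    (not_hyperplane_subset (by simpa using hn) he hy₀ _)).exists_isSectionCell he
  exact ⟨_, g, V, he, hV⟩

lemma isConvexQuadric_frontier_of_mem_strictBarrierCone (hn : 3 ≤ n) (hK : Convex ℝ K)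
    (hcl : IsClosed K) (hint : (interior K).Nonempty) (hy₀ : y₀ ∈ strictBarrierCone K)
    (hδ : Continuous δ) (hsec : ∀ u : sphere (0 : En n) 1,
      sphHyp δ u ⊆ K ∨ IsConvexQuadricIn (sphHyp δ u) (frontier K ∩ sphHyp δ u)) :
    IsConvexQuadric (frontier K) := by
  have hdim : 3 ≤ Module.finrank ℝ (En n) := by simpa using hn
  obtain ⟨D, hcont, hhom, hDδ⟩ := exists_homogeneous_extension hδ
  have hcell {y : En n} (hy : y ≠ 0) :=
    exists_isSectionCell_of_sections hn hy₀ hsec hhom hDδ hy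
  have hD : IsTransversalHeight K D := ⟨hcont, hhom, fun y hy => by
    obtain ⟨e, g, V, he, hV⟩ := hcell hy
    exact hV.exists_mem_interior hdim he hK hcl hy₀⟩
  have hquad (y : En n) (hy : y ≠ 0) : ∃ q, IsSectionQuadratic K D y q := by
    obtain ⟨e, g, V, he, hV⟩ := hcell hy
    exact hV.exists_isSectionQuadratic hdim he hK hcl hy₀
  obtain ⟨Q, hQ, hzero, hne⟩ := hD.exists_quadratic_eq_zero_on_frontier hdim hK hcl hquad hy₀
  have hfrontier : frontier (interior K) = frontier K := by
    rw [isOpen_interior.frontier_eq, closure_interior_eq_self hK hcl hint, hcl.frontier_eq]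
  have hproper : interior K ≠ univ := fun h => by
    obtain ⟨d, hd, -⟩ := exists_ne_zero_inner_eq_zero_pair hdim y₀ y₀
    obtain ⟨t, ht⟩ := exists_line_point_notMem hy₀ 0 hd
    exact ht (interior_subset (h ▸ mem_univ _))
  have hQcell : IsQuadraticCell Q (interior K) :=
    ⟨hQ, isOpen_interior, hK.interior, hint, hproper, hne, hfrontier.symm ▸ hzero⟩
  exact hfrontier ▸ hQcell.isConvexQuadric_frontier

end QuadricSections

/-- Theorem 2: if K ⊆ ℝⁿ (n ≥ 3) is a closed convex set with nonempty
interior, K ≠ ℝⁿ, and δ : S^{n−1} → ℝ is continuous such that every hyperplane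
H(u) = {x : ⟨x,u⟩ = δ(u)} either lies in K or meets the frontier of K along an
(n−1)-dimensional convex quadric, then the frontier of K is a convex quadric. -/
theorem frontier_is_convex_quadric_of_quadric_sections
    {n : ℕ} (hn : 3 ≤ n) (K : Set (En n)) (hKconv : Convex ℝ K) (hKcl : IsClosed K)
    (hKint : (interior K).Nonempty) (hKne : K ≠ Set.univ)
    (δ : sphere (0 : En n) 1 → ℝ) (hδ : Continuous δ)
    (hsec : ∀ u : sphere (0 : En n) 1,
      sphHyp δ u ⊆ K ∨ IsConvexQuadricIn (sphHyp δ u) (frontier K ∩ sphHyp δ u)) :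
    IsConvexQuadric (frontier K) := by
  rcases strictBarrierCone_nonempty_or_isCylinder hKconv hKcl (hKint.mono interior_subset) with
    ⟨y₀, hy₀⟩ | ⟨v, hv, hcyl⟩
  · exact isConvexQuadric_frontier_of_mem_strictBarrierCone hn hKconv hKcl hKint hy₀ hδ hsec
  · exact isConvexQuadric_frontier_of_isCylinder hv hcyl hKne hsec
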